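/- Let α < ω₁. Then there is a block subspace X ⊆ W such that one of the following holds: (1) for every block sequence (y_n) in X and every K ≥ 1, player I has a strategy in F^{ωα}_X to play outcomes (x_0,…,x_k) satisfying (x_0,…,x_k) ≁_K (y_0,…,y_k); or (2) there is K ≥ 1 such that for every block sequence (z_n) in X, player II has a strategy in G^α_X to play outcomes (x_0,…,x_k) satisfying (x_0,…,x_k) ∼_K (z_0,…,z_k). -/

import Mathlib

open Filter Topology

namespace Rosendal

variable {𝒲 : Type} [NormedAddCommGroup 𝒲] [NormedSpace ℝ 𝒲]

/-- `(e n)` is a Schauder basis of the Banach space `𝒲`. -/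
def IsSchauderBasis (e : ℕ → 𝒲) : Prop :=
  ∀ x : 𝒲, ∃! a : ℕ → ℝ,
    Tendsto (fun N => ∑ i ∈ Finset.range N, a i • e i) atTop (𝓝 x)

/-- `x` is a linear combination of the vectors `b i`, `i ∈ s`. -/
def SuppIn (b : ℕ → 𝒲) (x : 𝒲) (s : Finset ℕ) : Prop :=
  ∃ a : ℕ → ℝ, x = ∑ i ∈ s, a i • b i

/-- `(x i)_{i<k} ∼_K (y i)_{i<k}`. -/
def SeqEquiv (K : ℝ) (k : ℕ) (x y : ℕ → 𝒲) : Prop :=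
  ∀ a : ℕ → ℝ,
    (1 / K) * ‖∑ i ∈ Finset.range k, a i • x i‖ ≤ ‖∑ i ∈ Finset.range k, a i • y i‖ ∧
    ‖∑ i ∈ Finset.range k, a i • y i‖ ≤ K * ‖∑ i ∈ Finset.range k, a i • x i‖

/-- The outcome `l = (x 0, …, x k)` satisfies `(x 0, …, x k) ∼_K (y 0, …, y k)`. -/
def OutcomeEquiv (K : ℝ) (l : List 𝒲) (y : ℕ → 𝒲) : Prop :=
  SeqEquiv K l.length (fun i => l.getD i 0) y

/-- The outcome `l = (u 0, v 0, u 1, v 1, …, u k, v k)` satisfies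
`(u 0, …, u k) ∼_K (v 0, …, v k)`. -/
def PairOutcomeEquiv (K : ℝ) (l : List 𝒲) : Prop :=
  SeqEquiv K (l.length / 2) (fun i => l.getD (2 * i) 0) (fun i => l.getD (2 * i + 1) 0)

/-- The tree `T((x n), Y, K)`. -/
def embTree (x : ℕ → 𝒲) (Y : Set 𝒲) (K : ℝ) : Set (List 𝒲) :=
  {l | (∀ v ∈ l, v ∈ Y) ∧ SeqEquiv K l.length (fun i => l.getD i 0) x}

open Classical in
/-- The rank of a tree of finite sequences; `⊤ = ∞` if it is ill-founded. -/
noncomputable def treeRank (T : Set (List 𝒲)) : WithTop Ordinal :=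
  if h : WellFounded (fun t s : T => s.val <+: t.val ∧ s.val ≠ t.val) then
    ((⨆ s : T, Order.succ ((h.apply s).rank) : Ordinal) : WithTop Ordinal)
  else ⊤

open Classical in
/-- The embeddability index `Emb((x n), Y) = sup_{K ≥ 1} rank T((x n), Y, K)`. -/
noncomputable def embIndex (x : ℕ → 𝒲) (Y : Set 𝒲) : WithTop Ordinal :=
  if ∃ K : ℝ, 1 ≤ K ∧ treeRank (embTree x Y K) = ⊤ then ⊤
  else ((sSup {o : Ordinal | ∃ K : ℝ, 1 ≤ K ∧
      (o : WithTop Ordinal) = treeRank (embTree x Y K)} : Ordinal) : WithTop Ordinal)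

/-- `(I m)` is a sequence of successive nonempty finite intervals `I 0 < I 1 < …` of `ℕ`. -/
def IntervalSeq (I : ℕ → Finset ℕ) : Prop :=
  (∀ m, ∃ a b : ℕ, a ≤ b ∧ I m = Finset.Icc a b) ∧
  ∀ m, ∀ i ∈ I m, ∀ j ∈ I (m + 1), i < j

/-- The setting of Section 2 of the paper: a Banach space `𝒲` with a Schauder basis
`(e n)`, a countable subfield `𝔽 ⊆ ℝ` closed under the norms of finite `𝔽`-linear
combinations of the basis, and the countable `𝔽`-vector space `W` spanned by `(e n)`. -/
structure Frame (𝒲 : Type) [NormedAddCommGroup 𝒲] [NormedSpace ℝ 𝒲] : Type where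
  e : ℕ → 𝒲
  complete : CompleteSpace 𝒲
  basis : IsSchauderBasis e
  𝔽 : Subfield ℝ
  countable : (𝔽 : Set ℝ).Countable
  norm_mem : ∀ (s : Finset ℕ) (a : ℕ → ℝ), (∀ i ∈ s, a i ∈ 𝔽) →
    ‖∑ i ∈ s, a i • e i‖ ∈ 𝔽

namespace Frame

variable {𝒲 : Type} [NormedAddCommGroup 𝒲] [NormedSpace ℝ 𝒲] (ctx : Frame 𝒲)

/-- The `𝔽`-linear span of a set of vectors. -/
def fspan (S : Set 𝒲) : Set 𝒲 :=
  {v | ∃ t : Finset 𝒲, ↑t ⊆ S ∧ ∃ c : 𝒲 → ℝ, (∀ w, c w ∈ ctx.𝔽) ∧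
    v = ∑ w ∈ t, c w • w}

/-- The countable `𝔽`-vector space `W` with basis `(e n)`. -/
def W : Set 𝒲 := ctx.fspan (Set.range ctx.e)

/-- `(y n)` is a block sequence with respect to the reference block basis `(b n)`:
a sequence of nonzero vectors of the `𝔽`-span of `(b n)` with successive supports. -/
def BlockSeqRel (b y : ℕ → 𝒲) : Prop :=
  (∀ n, y n ∈ ctx.fspan (Set.range b)) ∧ (∀ n, y n ≠ 0) ∧
  ∃ D : ℕ → Finset ℕ, (∀ n, SuppIn b (y n) (D n)) ∧
    ∀ n, ∀ i ∈ D n, ∀ j ∈ D (n + 1), i < j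

/-- `(y n)` is a block sequence (with respect to the basis `(e n)` of `W`). -/
def IsBlockSeq (y : ℕ → 𝒲) : Prop := ctx.BlockSeqRel ctx.e y

/-- `Y` is a block subspace of `X`: the `𝔽`-span of an infinite block sequence of
vectors of `X`. -/
def IsBlockSubspaceOf (Y X : Set 𝒲) : Prop :=
  ∃ y : ℕ → 𝒲, ctx.IsBlockSeq y ∧ (∀ n, y n ∈ X) ∧ Y = ctx.fspan (Set.range y)

/-- `Y` is a block subspace of `W`. -/
def IsBlockSubspace (Y : Set 𝒲) : Prop := ctx.IsBlockSubspaceOf Y ctx.W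

/-- `F` is a finite-dimensional `𝔽`-subspace of `X`. -/
def IsFinDimIn (F X : Set 𝒲) : Prop :=
  ∃ t : Finset 𝒲, ↑t ⊆ X ∧ F = ctx.fspan ↑t

/-- `n < F`: every vector of `F` is supported on basis vectors of index `> n`. -/
def NatLt (n : ℕ) (F : Set 𝒲) : Prop :=
  ∀ x ∈ F, ∃ s : Finset ℕ, SuppIn ctx.e x s ∧ ∀ i ∈ s, n < i

/-- `V` is an `𝔽`-subspace of `𝒲`. -/
def IsSubspace (V : Set 𝒲) : Prop :=
  (0 : 𝒲) ∈ V ∧ (∀ u v : 𝒲, u ∈ V → v ∈ V → u + v ∈ V) ∧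
    ∀ c : ℝ, c ∈ ctx.𝔽 → ∀ v ∈ V, c • v ∈ V

/-- `V` is infinite-dimensional (not contained in a finitely generated subspace). -/
def IsInfDim (V : Set 𝒲) : Prop :=
  ¬∃ t : Finset 𝒲, V ⊆ ctx.fspan ↑t

/-- Game values of the asymptotic game `F^β_X`, for player II, computed by transfinite
recursion on the ordinal bound.  `IIWinsF X S β Facc vec` states: in the asymptotic game
below `X`, from a position where the vectors `vec` have been played and the
finite-dimensional subspaces played by II span `Facc`, and where I must now play a natural
number together with an ordinal `< β`, player II has a strategy so that the final outcome
lies in `S`. -/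
noncomputable def IIWinsF (X : Set 𝒲) (S : Set (List 𝒲)) :
    Ordinal → Set 𝒲 → List 𝒲 → Prop :=
  WellFounded.fix (C := fun _ : Ordinal => Set 𝒲 → List 𝒲 → Prop) Ordinal.lt_wf
    (fun β ih Facc vec =>
      ∀ n : ℕ, ∀ ξ : Ordinal, ∀ hξ : ξ < β,
        ∃ F : Set 𝒲, ctx.IsFinDimIn F X ∧ ctx.NatLt n F ∧
          ∃ x : 𝒲, x ≠ 0 ∧ x ∈ ctx.fspan (Facc ∪ F) ∧
            (ξ = 0 → vec ++ [x] ∈ S) ∧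
            (ξ ≠ 0 → ih ξ hξ (ctx.fspan (Facc ∪ F)) (vec ++ [x])))

/-- Player II has a strategy in the asymptotic game `F^β_X` to play an outcome in `S`. -/
noncomputable def IIStratF (X : Set 𝒲) (β : Ordinal) (S : Set (List 𝒲)) : Prop :=
  (β = 0 → ([] : List 𝒲) ∈ S) ∧ (β ≠ 0 → ctx.IIWinsF X S β (ctx.fspan ∅) [])

/-- Game values of the asymptotic game `F^β_X` for player I (who plays the integers and
the ordinals, trying to steer the outcome into `S`). -/
noncomputable def IWinsF (X : Set 𝒲) (S : Set (List 𝒲)) :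
    Ordinal → Set 𝒲 → List 𝒲 → Prop :=
  WellFounded.fix (C := fun _ : Ordinal => Set 𝒲 → List 𝒲 → Prop) Ordinal.lt_wf
    (fun β ih Facc vec =>
      ∃ n : ℕ, ∃ ξ : Ordinal, ∃ hξ : ξ < β,
        ∀ F : Set 𝒲, ctx.IsFinDimIn F X → ctx.NatLt n F →
        ∀ x : 𝒲, x ≠ 0 → x ∈ ctx.fspan (Facc ∪ F) →
          (ξ = 0 → vec ++ [x] ∈ S) ∧
          (ξ ≠ 0 → ih ξ hξ (ctx.fspan (Facc ∪ F)) (vec ++ [x])))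

/-- Player I has a strategy in the asymptotic game `F^β_X` to play an outcome in `S`. -/
noncomputable def IStratF (X : Set 𝒲) (β : Ordinal) (S : Set (List 𝒲)) : Prop :=
  (β = 0 → ([] : List 𝒲) ∈ S) ∧ (β ≠ 0 → ctx.IWinsF X S β (ctx.fspan ∅) [])

/-- Game values of the Gowers game `G^α_X` for player II. -/
noncomputable def IIWinsG (X : Set 𝒲) (S : Set (List 𝒲)) :
    Ordinal → Set 𝒲 → List 𝒲 → Prop :=
  WellFounded.fix (C := fun _ : Ordinal => Set 𝒲 → List 𝒲 → Prop) Ordinal.lt_wf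
    (fun α ih Facc vec =>
      ∀ Y : Set 𝒲, ctx.IsBlockSubspaceOf Y X →
      ∀ ξ : Ordinal, ∀ hξ : ξ < α,
        ∃ F : Set 𝒲, ctx.IsFinDimIn F Y ∧
          ∃ x : 𝒲, x ≠ 0 ∧ x ∈ ctx.fspan (Facc ∪ F) ∧
            (ξ = 0 → vec ++ [x] ∈ S) ∧
            (ξ ≠ 0 → ih ξ hξ (ctx.fspan (Facc ∪ F)) (vec ++ [x])))

/-- Player II has a strategy in the generalised Gowers game `G^α_X` to play in `S`. -/
noncomputable def IIStratG (X : Set 𝒲) (α : Ordinal) (S : Set (List 𝒲)) : Prop :=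
  (α = 0 → ([] : List 𝒲) ∈ S) ∧ (α ≠ 0 → ctx.IIWinsG X S α (ctx.fspan ∅) [])

/-- Game values of the adversarial game `A^α_X` for player II (who plays the integers,
the finite-dimensional subspaces `F_l ⊆ Y_l` and the vectors `y_l`). -/
noncomputable def IIWinsA (X : Set 𝒲) (S : Set (List 𝒲)) :
    Ordinal → Set 𝒲 → Set 𝒲 → List 𝒲 → Prop :=
  WellFounded.fix (C := fun _ : Ordinal => Set 𝒲 → Set 𝒲 → List 𝒲 → Prop)
    Ordinal.lt_wf
    (fun α ih Eacc Facc vec =>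
      ∃ n : ℕ,
        ∀ E : Set 𝒲, ctx.IsFinDimIn E X → ctx.NatLt n E →
        ∀ x : 𝒲, x ≠ 0 → x ∈ ctx.fspan (Eacc ∪ E) →
        ∀ Y : Set 𝒲, ctx.IsBlockSubspaceOf Y X →
        ∀ ξ : Ordinal, ∀ hξ : ξ < α,
          ∃ F : Set 𝒲, ctx.IsFinDimIn F Y ∧
            ∃ y : 𝒲, y ≠ 0 ∧ y ∈ ctx.fspan (Facc ∪ F) ∧
              (ξ = 0 → vec ++ [x, y] ∈ S) ∧
              (ξ ≠ 0 → ih ξ hξ (ctx.fspan (Eacc ∪ E)) (ctx.fspan (Facc ∪ F))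
                (vec ++ [x, y])))

/-- Player II has a strategy in the adversarial game `A^α_X` to play in `S`. -/
noncomputable def IIStratA (X : Set 𝒲) (α : Ordinal) (S : Set (List 𝒲)) : Prop :=
  (α = 0 → ([] : List 𝒲) ∈ S) ∧
  (α ≠ 0 → ctx.IIWinsA X S α (ctx.fspan ∅) (ctx.fspan ∅) [])

/-- Game values of the adversarial game `B^α_X` for player I (who plays the
finite-dimensional subspaces `E_l ⊆ Y_l`, the vectors `x_l`, the integers and the
ordinals). -/
noncomputable def IWinsB (X : Set 𝒲) (S : Set (List 𝒲)) :
    Ordinal → Set 𝒲 → Set 𝒲 → List 𝒲 → Prop :=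
  WellFounded.fix (C := fun _ : Ordinal => Set 𝒲 → Set 𝒲 → List 𝒲 → Prop)
    Ordinal.lt_wf
    (fun α ih Eacc Facc vec =>
      ∀ Y : Set 𝒲, ctx.IsBlockSubspaceOf Y X →
        ∃ E : Set 𝒲, ctx.IsFinDimIn E Y ∧
          ∃ x : 𝒲, x ≠ 0 ∧ x ∈ ctx.fspan (Eacc ∪ E) ∧
            ∃ n : ℕ, ∃ ξ : Ordinal, ∃ hξ : ξ < α,
              ∀ F : Set 𝒲, ctx.IsFinDimIn F X → ctx.NatLt n F →
              ∀ y : 𝒲, y ≠ 0 → y ∈ ctx.fspan (Facc ∪ F) →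
                (ξ = 0 → vec ++ [x, y] ∈ S) ∧
                (ξ ≠ 0 → ih ξ hξ (ctx.fspan (Eacc ∪ E)) (ctx.fspan (Facc ∪ F))
                  (vec ++ [x, y])))

/-- Player I has a strategy in the adversarial game `B^α_X` to play in `S`. -/
noncomputable def IStratB (X : Set 𝒲) (α : Ordinal) (S : Set (List 𝒲)) : Prop :=
  (α = 0 → ([] : List 𝒲) ∈ S) ∧
  (α ≠ 0 → ctx.IWinsB X S α (ctx.fspan ∅) (ctx.fspan ∅) [])

/-- Game values of the adversarial game `B^α_X` for player II (who plays the block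
subspaces `Y_l`, the finite-dimensional subspaces `F_l` and the vectors `y_l`). -/
noncomputable def IIWinsB (X : Set 𝒲) (S : Set (List 𝒲)) :
    Ordinal → Set 𝒲 → Set 𝒲 → List 𝒲 → Prop :=
  WellFounded.fix (C := fun _ : Ordinal => Set 𝒲 → Set 𝒲 → List 𝒲 → Prop)
    Ordinal.lt_wf
    (fun α ih Eacc Facc vec =>
      ∃ Y : Set 𝒲, ctx.IsBlockSubspaceOf Y X ∧
        ∀ E : Set 𝒲, ctx.IsFinDimIn E Y →
        ∀ x : 𝒲, x ≠ 0 → x ∈ ctx.fspan (Eacc ∪ E) →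
        ∀ n : ℕ, ∀ ξ : Ordinal, ∀ hξ : ξ < α,
          ∃ F : Set 𝒲, ctx.IsFinDimIn F X ∧ ctx.NatLt n F ∧
            ∃ y : 𝒲, y ≠ 0 ∧ y ∈ ctx.fspan (Facc ∪ F) ∧
              (ξ = 0 → vec ++ [x, y] ∈ S) ∧
              (ξ ≠ 0 → ih ξ hξ (ctx.fspan (Eacc ∪ E)) (ctx.fspan (Facc ∪ F))
                (vec ++ [x, y])))

/-- Player II has a strategy in the adversarial game `B^α_X` to play in `S`. -/
noncomputable def IIStratB (X : Set 𝒲) (α : Ordinal) (S : Set (List 𝒲)) : Prop :=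
  (α = 0 → ([] : List 𝒲) ∈ S) ∧
  (α ≠ 0 → ctx.IIWinsB X S α (ctx.fspan ∅) (ctx.fspan ∅) [])

end Frame

end Rosendal

/-!
If (1) fails in every block subspace, then in each of them there are a block sequence `y` and a
constant `K` such that player II can play a copy of `y` in the asymptotic game `F^{ωα}`, by
determinacy. Passing to a diagonal subspace makes `K` independent of the subspace. A Ramsey argument
then yields a subspace `X` in which either II wins the adversarial game `A^α`, where she has to copy
with constant `K` the vectors that I plays far out, or I wins the dual game `B^α` against this.

In `F^{ωα}` player II moves `ω` times as often as in the `α`-games, so that before each of their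
rounds she can play any finite number of vectors, and thus copy any vector in the span of `y`, which
is a linear combination of finitely many `y i`. This defeats the strategy of I in `B^α`: confine him
to the span of `y` and answer with copies of his vectors. So II wins `A^α`. Given a block sequence
`z` in the span of `y`, she now feeds the copies of the `z i` into her strategy in `A^α` as the
moves of I, and the answers form a sequence `K²`-equivalent to `z` that she can play in `G^α`.
-/

namespace Rosendal

variable {𝒲 : Type} [NormedAddCommGroup 𝒲] [NormedSpace ℝ 𝒲]

namespace IsSchauderBasis

open scoped BoundedContinuousFunction

variable {e : ℕ → 𝒲}

theorem coord_unique (he : IsSchauderBasis e) {x : 𝒲} {a b : ℕ → ℝ}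
    (ha : Tendsto (fun N => ∑ i ∈ Finset.range N, a i • e i) atTop (𝓝 x))
    (hb : Tendsto (fun N => ∑ i ∈ Finset.range N, b i • e i) atTop (𝓝 x)) : a = b :=
  (he x).unique ha hb

theorem ne_zero (he : IsSchauderBasis e) (i : ℕ) : e i ≠ 0 := by
  intro hi
  have h : (Pi.single i 1 : ℕ → ℝ) = 0 :=
    he.coord_unique (x := 0) (by simp [Pi.single_apply, hi]) (by simp)
  simpa using congrFun h i

/-- The linear map sending a vector to its sequence of coordinates in a Schauder basis. -/
noncomputable def coord (he : IsSchauderBasis e) : 𝒲 →ₗ[ℝ] ℕ → ℝ where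
  toFun x := (he x).choose
  map_add' x y := by
    refine he.coord_unique (he (x + y)).choose_spec.1
      (((he x).choose_spec.1.add (he y).choose_spec.1).congr fun N => ?_)
    simp only [Pi.add_apply, add_smul, Finset.sum_add_distrib]
  map_smul' c x := by
    refine he.coord_unique (he (c • x)).choose_spec.1
      (((he x).choose_spec.1.const_smul c).congr fun N => ?_)
    simp only [RingHom.id_apply, Pi.smul_apply, smul_assoc, Finset.smul_sum]

theorem tendsto_coord (he : IsSchauderBasis e) (x : 𝒲) :
    Tendsto (fun N => ∑ i ∈ Finset.range N, he.coord x i • e i) atTop (𝓝 x) :=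
  (he x).choose_spec.1

theorem coord_basis (he : IsSchauderBasis e) (i : ℕ) : he.coord (e i) = Pi.single i 1 := by
  refine he.coord_unique (he.tendsto_coord _) (tendsto_const_nhds.congr' ?_)
  filter_upwards [eventually_gt_atTop i] with N hN
  simp [Pi.single_apply, hN]

/-- The linear map sending a vector to the bounded sequence of the partial sums of its expansion
in a Schauder basis. -/
noncomputable def partialSum (he : IsSchauderBasis e) : 𝒲 →ₗ[ℝ] ℕ →ᵇ 𝒲 where
  toFun x :=
    have hbdd := (Metric.isBounded_range_of_tendsto _ (he.tendsto_coord x)).exists_norm_le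
    BoundedContinuousFunction.ofNormedAddCommGroupDiscrete
      (fun N => ∑ i ∈ Finset.range N, he.coord x i • e i) hbdd.choose
      fun N => hbdd.choose_spec _ ⟨N, rfl⟩
  map_add' x y := by
    ext N
    simp [add_smul, Finset.sum_add_distrib]
  map_smul' c x := by
    ext N
    simp [smul_smul, Finset.smul_sum]

theorem partialSum_apply (he : IsSchauderBasis e) (x : 𝒲) (N : ℕ) :
    he.partialSum x N = ∑ i ∈ Finset.range N, he.coord x i • e i :=
  rfl

theorem partialSum_succ_sub (he : IsSchauderBasis e) (x : 𝒲) (N : ℕ) :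
    he.partialSum x (N + 1) - he.partialSum x N = he.coord x N • e N := by
  rw [partialSum_apply, partialSum_apply, Finset.sum_range_succ, add_sub_cancel_left]

/-- A limit of partial sum sequences is again a sequence of partial sums, since each line
`ℝ • e N` is closed. -/
theorem exists_eq_sum_of_tendsto_partialSum (he : IsSchauderBasis e) {u : ℕ → 𝒲} {g : ℕ →ᵇ 𝒲}
    (hg : Tendsto (he.partialSum ∘ u) atTop (𝓝 g)) :
    ∃ c : ℕ → ℝ, ∀ N, g N = ∑ i ∈ Finset.range N, c i • e i := by
  have hgN (N : ℕ) : Tendsto (fun k => he.partialSum (u k) N) atTop (𝓝 (g N)) :=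
    ((BoundedContinuousFunction.evalCLM ℝ N (β := 𝒲)).continuous.tendsto g).comp hg
  have hincrement (N : ℕ) : ∃ c : ℝ, c • e N = g (N + 1) - g N :=
    (isClosedEmbedding_smul_left (he.ne_zero N)).isClosed_range.mem_of_tendsto
      ((hgN (N + 1)).sub (hgN N))
      (.of_forall fun k => ⟨_, (he.partialSum_succ_sub (u k) N).symm⟩)
  choose c hc using hincrement
  have hzero : g 0 = 0 := tendsto_nhds_unique (hgN 0) (by simp [partialSum_apply])
  refine ⟨c, fun N => ?_⟩
  simp only [hc, Finset.sum_range_sub, hzero, sub_zero]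

theorem continuous_partialSum [CompleteSpace 𝒲] (he : IsSchauderBasis e) :
    Continuous he.partialSum := by
  refine LinearMap.continuous_of_seq_closed_graph _ fun u x g hu hg => ?_
  obtain ⟨c, hc⟩ := he.exists_eq_sum_of_tendsto_partialSum hg
  have hlim : Tendsto g atTop (𝓝 x) :=
    (BoundedContinuousFunction.tendsto_iff_tendstoUniformly.1 hg).tendsto_of_eventually_tendsto
      (.of_forall fun k => he.tendsto_coord (u k)) hu
  have hcoord : c = he.coord x := he.coord_unique (hlim.congr hc) (he.tendsto_coord x)
  ext N
  rw [hc, hcoord, partialSum_apply]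

theorem continuous_coord [CompleteSpace 𝒲] (he : IsSchauderBasis e) (i : ℕ) :
    Continuous fun x => he.coord x i := by
  refine (isClosedEmbedding_smul_left (𝕜 := ℝ) (he.ne_zero i)).isInducing.continuous_iff.2 ?_
  refine Continuous.congr ?_ fun x => he.partialSum_succ_sub x i
  have heval (N : ℕ) : Continuous fun x => he.partialSum x N :=
    (BoundedContinuousFunction.evalCLM ℝ N (β := 𝒲)).continuous.comp he.continuous_partialSum
  exact (heval (i + 1)).sub (heval i)

theorem exists_schauderBasis [CompleteSpace 𝒲] (he : IsSchauderBasis e) :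
    ∃ b : SchauderBasis ℝ 𝒲, ⇑b = e :=
  ⟨{ basis := e
     coord i := ⟨LinearMap.proj i ∘ₗ he.coord, he.continuous_coord i⟩
     ortho i j := (congrFun (he.coord_basis j) i).trans (by congr)
     expansion x := by
       rw [HasSum, SummationFilter.conditional_filter_eq_map_range, tendsto_map'_iff]
       exact he.tendsto_coord x }, rfl⟩

end IsSchauderBasis

namespace Frame

section Fspan

variable (ctx : Frame 𝒲)

theorem fspan_eq_span (S : Set 𝒲) : ctx.fspan S = Submodule.span ctx.𝔽 S := by
  ext v
  constructor
  · rintro ⟨t, ht, c, hc, rfl⟩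
    exact sum_mem fun w hw =>
      Submodule.smul_mem _ (⟨c w, hc w⟩ : ctx.𝔽) (Submodule.subset_span (ht hw))
  · intro hv
    rw [SetLike.mem_coe, ← Set.image_id S, Submodule.mem_span_image_iff_exists_fun] at hv
    obtain ⟨t, ht, c, rfl⟩ := hv
    classical
    refine ⟨t, ht, fun w => if hw : w ∈ t then c ⟨w, hw⟩ else 0, fun w => ?_, ?_⟩
    · dsimp only
      split_ifs
      exacts [Subtype.property _, ctx.𝔽.zero_mem]
    · rw [← Finset.sum_coe_sort t]
      exact Finset.sum_congr rfl fun w _ => by simp [Subfield.smul_def]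

theorem subset_fspan (S : Set 𝒲) : S ⊆ ctx.fspan S := by
  rw [fspan_eq_span]
  exact Submodule.subset_span

theorem fspan_mono {S T : Set 𝒲} (h : S ⊆ T) : ctx.fspan S ⊆ ctx.fspan T := by
  rw [fspan_eq_span, fspan_eq_span]
  exact Submodule.span_mono h

theorem fspan_subset_fspan {S T : Set 𝒲} (h : S ⊆ ctx.fspan T) : ctx.fspan S ⊆ ctx.fspan T := by
  rw [fspan_eq_span, fspan_eq_span] at *
  exact Submodule.span_le.2 h

theorem fspan_fspan (S : Set 𝒲) : ctx.fspan (ctx.fspan S) = ctx.fspan S :=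
  (ctx.fspan_subset_fspan subset_rfl).antisymm (ctx.subset_fspan _)

theorem fspan_fspan_union (A B : Set 𝒲) : ctx.fspan (ctx.fspan A ∪ B) = ctx.fspan (A ∪ B) := by
  simp only [fspan_eq_span, Submodule.span_union, Submodule.span_coe_eq_restrictScalars,
    Submodule.restrictScalars_self]

theorem fspan_union_fspan (A B : Set 𝒲) : ctx.fspan (A ∪ ctx.fspan B) = ctx.fspan (A ∪ B) := by
  rw [Set.union_comm, fspan_fspan_union, Set.union_comm]

end Fspan

section Subspaces

variable {ctx : Frame 𝒲} {F F' X X' Y S : Set 𝒲} {y : ℕ → 𝒲}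

theorem isFinDimIn_fspan_empty (X : Set 𝒲) : ctx.IsFinDimIn (ctx.fspan ∅) X :=
  ⟨∅, by simp⟩

theorem IsFinDimIn.mono (hF : ctx.IsFinDimIn F X) (h : X ⊆ X') : ctx.IsFinDimIn F X' :=
  let ⟨t, ht, hFt⟩ := hF
  ⟨t, ht.trans h, hFt⟩

theorem IsFinDimIn.of_subset (hF : ctx.IsFinDimIn F X) (h : F ⊆ X') : ctx.IsFinDimIn F X' := by
  obtain ⟨t, -, rfl⟩ := hF
  exact ⟨t, (ctx.subset_fspan _).trans h, rfl⟩

theorem IsFinDimIn.union (hF : ctx.IsFinDimIn F X) (hF' : ctx.IsFinDimIn F' X) :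
    ctx.IsFinDimIn (ctx.fspan (F ∪ F')) X := by
  classical
  obtain ⟨t, ht, rfl⟩ := hF
  obtain ⟨t', ht', rfl⟩ := hF'
  refine ⟨t ∪ t', by simp [ht, ht'], ?_⟩
  rw [fspan_fspan_union, fspan_union_fspan, Finset.coe_union]

theorem IsBlockSeq.isBlockSubspace (hy : ctx.IsBlockSeq y) :
    ctx.IsBlockSubspace (ctx.fspan (Set.range y)) :=
  ⟨y, hy, hy.1, rfl⟩

theorem IsBlockSubspace.fspan_eq (hX : ctx.IsBlockSubspace X) : ctx.fspan X = X := by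
  obtain ⟨y, -, -, rfl⟩ := hX
  exact ctx.fspan_fspan _

theorem IsBlockSubspace.fspan_subset (hX : ctx.IsBlockSubspace X) (h : S ⊆ X) :
    ctx.fspan S ⊆ X :=
  (ctx.fspan_mono h).trans_eq hX.fspan_eq

theorem IsBlockSubspace.subset_W (hX : ctx.IsBlockSubspace X) : X ⊆ ctx.W := by
  obtain ⟨y, -, hyW, rfl⟩ := hX
  exact ctx.fspan_subset_fspan (Set.range_subset_iff.2 hyW)

theorem isBlockSubspaceOf_iff (hX : ctx.IsBlockSubspace X) :
    ctx.IsBlockSubspaceOf Y X ↔ ctx.IsBlockSubspace Y ∧ Y ⊆ X := by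
  constructor
  · rintro ⟨y, hy, hyX, rfl⟩
    exact ⟨hy.isBlockSubspace, hX.fspan_subset (Set.range_subset_iff.2 hyX)⟩
  · rintro ⟨⟨y, hy, -, rfl⟩, hYX⟩
    exact ⟨y, hy, fun n => hYX (ctx.subset_fspan _ ⟨n, rfl⟩), rfl⟩

theorem IsFinDimIn.subset (hF : ctx.IsFinDimIn F X) (hX : ctx.IsBlockSubspace X) : F ⊆ X := by
  obtain ⟨t, ht, rfl⟩ := hF
  exact hX.fspan_subset ht

end Subspaces

section Supported

variable (ctx : Frame 𝒲)

theorem linearIndependent_e : LinearIndependent ℝ ctx.e := by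
  have := ctx.complete
  obtain ⟨b, hb⟩ := ctx.basis.exists_schauderBasis
  exact hb ▸ b.linearIndependent

/-- The real linear span of the basis vectors with index in `s`. -/
def supported (s : Set ℕ) : Submodule ℝ 𝒲 :=
  Submodule.span ℝ (ctx.e '' s)

theorem supported_mono {s t : Set ℕ} (h : s ⊆ t) : ctx.supported s ≤ ctx.supported t :=
  Submodule.span_mono (Set.image_mono h)

theorem disjoint_supported {s t : Set ℕ} (h : Disjoint s t) :
    Disjoint (ctx.supported s) (ctx.supported t) :=
  ctx.linearIndependent_e.disjoint_span_image h

theorem supported_inter (s t : Set ℕ) :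
    ctx.supported (s ∩ t) = ctx.supported s ⊓ ctx.supported t := by
  simp only [supported, Finsupp.span_image_eq_map_linearCombination, Finsupp.supported_inter]
  exact Submodule.map_inf _ ctx.linearIndependent_e

theorem suppIn_iff_mem_supported {x : 𝒲} {s : Finset ℕ} :
    SuppIn ctx.e x s ↔ x ∈ ctx.supported s := by
  rw [supported, Submodule.mem_span_image_finset_iff_exists_fun']
  simp only [SuppIn, eq_comm]

theorem exists_finset_mem_supported {s : Set ℕ} {x : 𝒲} (hx : x ∈ ctx.supported s) :
    ∃ t : Finset ℕ, ↑t ⊆ s ∧ x ∈ ctx.supported t := by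
  rw [supported, Submodule.mem_span_image_iff_exists_fun] at hx
  obtain ⟨t, ht, c, rfl⟩ := hx
  exact ⟨t, ht, sum_mem fun i _ => Submodule.smul_mem _ _ (Submodule.subset_span ⟨i, by simp⟩)⟩

theorem natLt_iff_subset_supported {n : ℕ} {F : Set 𝒲} :
    ctx.NatLt n F ↔ F ⊆ ctx.supported (Set.Ioi n) := by
  simp only [NatLt, suppIn_iff_mem_supported]
  constructor
  · intro h x hx
    obtain ⟨s, hxs, hs⟩ := h x hx
    exact ctx.supported_mono hs hxs
  · intro h x hx
    obtain ⟨t, ht, hxt⟩ := ctx.exists_finset_mem_supported (h hx)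
    exact ⟨t, hxt, ht⟩

theorem fspan_subset_supported {S : Set 𝒲} {s : Set ℕ} (h : S ⊆ ctx.supported s) :
    ctx.fspan S ⊆ ctx.supported s := by
  rw [fspan_eq_span]
  exact (Submodule.span_le.2 h : _ ≤ (ctx.supported s).restrictScalars ctx.𝔽)

end Supported

section BlockSeq

variable {ctx : Frame 𝒲} {y : ℕ → 𝒲} {m : ℕ → ℕ} {X : Set 𝒲}

theorem isBlockSeq_of_mem_supported (hW : ∀ n, y n ∈ ctx.W) (hne : ∀ n, y n ≠ 0)
    (hm : ∀ n, y n ∈ ctx.supported (Set.Ico (m n) (m (n + 1)))) : ctx.IsBlockSeq y := by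
  refine ⟨hW, hne, fun n => Finset.Ico (m n) (m (n + 1)), fun n => ?_, fun n i hi j hj => ?_⟩
  · rw [suppIn_iff_mem_supported, Finset.coe_Ico]
    exact hm n
  · exact (Finset.mem_Ico.1 hi).2.trans_le (Finset.mem_Ico.1 hj).1

theorem IsBlockSeq.exists_mem_supported (hy : ctx.IsBlockSeq y) :
    ∃ m : ℕ → ℕ, StrictMono m ∧ ∀ n, y n ∈ ctx.supported (Set.Ico (m n) (m (n + 1))) := by
  obtain ⟨-, hne, D, hyD, hD⟩ := hy
  simp only [suppIn_iff_mem_supported] at hyD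
  have hDne (n : ℕ) : (D n).Nonempty := by
    rw [Finset.nonempty_iff_ne_empty]
    intro h
    simpa [h, supported, hne] using hyD n
  have hmin (n : ℕ) : ↑(D n) ⊆ Set.Ico ((D n).min' (hDne n)) ((D (n + 1)).min' (hDne (n + 1))) :=
    fun i hi => ⟨(D n).min'_le i hi, hD n i hi _ ((D (n + 1)).min'_mem _)⟩
  refine ⟨fun n => (D n).min' (hDne n), strictMono_nat_of_lt_succ fun n => ?_,
    fun n => ctx.supported_mono (hmin n) (hyD n)⟩
  exact hD n _ ((D n).min'_mem _) _ ((D (n + 1)).min'_mem _)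

theorem isBlockSeq_e : ctx.IsBlockSeq ctx.e :=
  isBlockSeq_of_mem_supported (m := id) (fun n => ctx.subset_fspan _ ⟨n, rfl⟩)
    ctx.basis.ne_zero fun n => Submodule.subset_span ⟨n, by simp⟩

theorem isBlockSubspace_W : ctx.IsBlockSubspace ctx.W :=
  isBlockSeq_e.isBlockSubspace

theorem IsBlockSeq.add_right (hy : ctx.IsBlockSeq y) (k : ℕ) :
    ctx.IsBlockSeq fun n => y (n + k) := by
  obtain ⟨m, -, hm⟩ := hy.exists_mem_supported
  refine isBlockSeq_of_mem_supported (m := fun n => m (n + k)) (fun n => hy.1 _)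
    (fun n => hy.2.1 _) fun n => ?_
  rw [add_right_comm]
  exact hm (n + k)

theorem fspan_image_Ici_subset_supported (hmono : Monotone m)
    (hm : ∀ n, y n ∈ ctx.supported (Set.Ico (m n) (m (n + 1)))) (k : ℕ) :
    ctx.fspan (y '' Set.Ici k) ⊆ ctx.supported (Set.Ici (m k)) := by
  refine ctx.fspan_subset_supported (Set.image_subset_iff.2 fun i hi => ?_)
  exact ctx.supported_mono (fun j hj => (hmono hi).trans hj.1) (hm i)

theorem fspan_range_inter_supported_subset (hmono : Monotone m)
    (hm : ∀ n, y n ∈ ctx.supported (Set.Ico (m n) (m (n + 1)))) (k : ℕ) :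
    ctx.fspan (Set.range y) ∩ ctx.supported (Set.Ici (m k)) ⊆ ctx.fspan (y '' Set.Ici k) := by
  rintro w ⟨hw, hwk⟩
  rw [fspan_eq_span, ← Set.image_univ, ← Set.Iio_union_Ici (a := k), Set.image_union,
    Submodule.span_union] at hw
  obtain ⟨a, ha, b, hb, rfl⟩ := Submodule.mem_sup.1 hw
  rw [← SetLike.mem_coe, ← fspan_eq_span] at ha hb
  have hak : a ∈ ctx.supported (Set.Iio (m k)) := by
    refine ctx.fspan_subset_supported (Set.image_subset_iff.2 fun i hi => ?_) ha
    exact ctx.supported_mono (fun j hj => hj.2.trans_le (hmono (Nat.succ_le_of_lt hi))) (hm i)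
  have ha_zero : a = 0 := by
    refine Submodule.disjoint_def.1 (ctx.disjoint_supported (Set.Iio_disjoint_Ici le_rfl)) a hak ?_
    exact (Submodule.add_mem_iff_left _ (fspan_image_Ici_subset_supported hmono hm k hb)).1 hwk
  rwa [ha_zero, zero_add]

theorem IsBlockSubspace.exists_subset_supported (hX : ctx.IsBlockSubspace X) (N : ℕ) :
    ∃ Y, ctx.IsBlockSubspace Y ∧ Y ⊆ X ∧ Y ⊆ ctx.supported (Set.Ici N) := by
  obtain ⟨y, hy, -, rfl⟩ := hX
  obtain ⟨m, hmono, hm⟩ := hy.exists_mem_supported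
  refine ⟨_, (hy.add_right N).isBlockSubspace,
    ctx.fspan_mono (Set.range_subset_iff.2 fun n => ⟨n + N, rfl⟩),
    ctx.fspan_subset_supported (Set.range_subset_iff.2 fun n => ?_)⟩
  exact ctx.supported_mono
    (fun j hj => ((Nat.le_add_left N n).trans hmono.le_apply).trans hj.1) (hm (n + N))

theorem IsBlockSubspace.exists_ne_zero (hX : ctx.IsBlockSubspace X) (N : ℕ) :
    ∃ x ∈ X, x ≠ 0 ∧ ∃ M, N < M ∧ x ∈ ctx.supported (Set.Ico N M) := by
  obtain ⟨y, hy, -, rfl⟩ := hX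
  obtain ⟨m, hmono, hm⟩ := hy.exists_mem_supported
  exact ⟨y N, ctx.subset_fspan _ ⟨N, rfl⟩, hy.2.1 N, m (N + 1),
    (Nat.lt_succ_self N).trans_le hmono.le_apply,
    ctx.supported_mono (Set.Ico_subset_Ico_left hmono.le_apply) (hm N)⟩

end BlockSeq

section Diagonalization

variable {ctx : Frame 𝒲} {X X₀ Y : Set 𝒲}

/-- `X ⊆* Y`: the set `Y` contains all vectors of `X` that are supported far enough along the
basis. -/
def AlmostSubset (ctx : Frame 𝒲) (X Y : Set 𝒲) : Prop :=
  ∃ N : ℕ, X ∩ ctx.supported (Set.Ici N) ⊆ Y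

theorem AlmostSubset.of_subset (h : X ⊆ Y) : ctx.AlmostSubset X Y :=
  ⟨0, Set.inter_subset_left.trans h⟩

theorem AlmostSubset.exists_isBlockSubspace_subset_inter (h : ctx.AlmostSubset X Y)
    (hX : ctx.IsBlockSubspace X) : ∃ Z, ctx.IsBlockSubspace Z ∧ Z ⊆ X ∩ Y := by
  obtain ⟨N, hN⟩ := h
  obtain ⟨Z, hZ, hZX, hZN⟩ := hX.exists_subset_supported N
  exact ⟨Z, hZ, fun z hz => ⟨hZX hz, hN ⟨hZX hz, hZN hz⟩⟩⟩

theorem exists_fusion_sequence {Φ : ℕ → ℕ → Set 𝒲 → Prop}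
    (hΦ : ∀ n N X, ctx.IsBlockSubspace X → ∃ Y, ctx.IsBlockSubspace Y ∧ Y ⊆ X ∧ Φ n N Y)
    (hX₀ : ctx.IsBlockSubspace X₀) :
    ∃ (Y : ℕ → Set 𝒲) (m : ℕ → ℕ) (v : ℕ → 𝒲), Antitone Y ∧ StrictMono m ∧ Y 0 ⊆ X₀ ∧
      ∀ n, ctx.IsBlockSubspace (Y n) ∧ Φ n (m n) (Y n) ∧ v n ∈ Y n ∧ v n ≠ 0 ∧
        v n ∈ ctx.supported (Set.Ico (m n) (m (n + 1))) := by
  have hstep (n : ℕ) (s : {X // ctx.IsBlockSubspace X} × ℕ) :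
      ∃ (s' : {X // ctx.IsBlockSubspace X} × ℕ) (x : 𝒲), s'.1.1 ⊆ s.1.1 ∧ s.2 < s'.2 ∧
        Φ n s.2 s'.1 ∧ x ∈ s'.1.1 ∧ x ≠ 0 ∧ x ∈ ctx.supported (Set.Ico s.2 s'.2) := by
    obtain ⟨⟨X, hX⟩, N⟩ := s
    obtain ⟨Y, hY, hYX, hΦY⟩ := hΦ n N X hX
    obtain ⟨x, hxY, hx, M, hNM, hxNM⟩ := hY.exists_ne_zero N
    exact ⟨⟨⟨Y, hY⟩, M⟩, x, hYX, hNM, hΦY, hxY, hx, hxNM⟩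
  choose next x hsub hlt hΦnext hmem hne hsupp using hstep
  let s (n : ℕ) : {X // ctx.IsBlockSubspace X} × ℕ := Nat.rec (⟨X₀, hX₀⟩, 0) next n
  exact ⟨fun n => (s (n + 1)).1, fun n => (s n).2, fun n => x n (s n),
    antitone_nat_of_succ_le fun n => hsub (n + 1) (s (n + 1)),
    strictMono_nat_of_lt_succ fun n => hlt n (s n), hsub 0 (s 0),
    fun n => ⟨(s (n + 1)).1.2, hΦnext n _, hmem n _, hne n _, hsupp n _⟩⟩

theorem exists_diagonal {Φ : ℕ → ℕ → Set 𝒲 → Prop}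
    (hΦ : ∀ n N X, ctx.IsBlockSubspace X → ∃ Y, ctx.IsBlockSubspace Y ∧ Y ⊆ X ∧ Φ n N Y)
    (hX₀ : ctx.IsBlockSubspace X₀) :
    ∃ X, ctx.IsBlockSubspace X ∧ X ⊆ X₀ ∧ ∀ n, ∃ N Y, ctx.IsBlockSubspace Y ∧ Φ n N Y ∧
      X ∩ ctx.supported (Set.Ici N) ⊆ Y := by
  obtain ⟨Y, m, v, hanti, hmono, hY₀, hv⟩ := exists_fusion_sequence hΦ hX₀
  choose hY hΦY hvY hne hsupp using hv
  have hblock : ctx.IsBlockSeq v :=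
    isBlockSeq_of_mem_supported (fun n => (hY n).subset_W (hvY n)) hne hsupp
  refine ⟨_, hblock.isBlockSubspace, hX₀.fspan_subset (Set.range_subset_iff.2 fun n => ?_),
    fun n => ⟨m n, Y n, hY n, hΦY n, ?_⟩⟩
  · exact hY₀ (hanti n.zero_le (hvY n))
  · refine (fspan_range_inter_supported_subset hmono.monotone hsupp n).trans ?_
    exact (hY n).fspan_subset (Set.image_subset_iff.2 fun i hi => hanti hi (hvY i))

theorem exists_deciding {ι : Type*} {I : Set ι} (hI : I.Countable) {P : ι → Set 𝒲 → Prop}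
    (hP : ∀ i ∈ I, ∀ X Y, ctx.IsBlockSubspace X → ctx.IsBlockSubspace Y →
      ctx.AlmostSubset X Y → P i Y → P i X)
    (hX₀ : ctx.IsBlockSubspace X₀) :
    ∃ X, ctx.IsBlockSubspace X ∧ X ⊆ X₀ ∧
      ∀ i ∈ I, P i X ∨ ∀ Z, ctx.IsBlockSubspace Z → Z ⊆ X → ¬P i Z := by
  obtain rfl | hne := I.eq_empty_or_nonempty
  · exact ⟨X₀, hX₀, subset_rfl, by simp⟩
  obtain ⟨f, rfl⟩ := hI.exists_eq_range hne
  let Decides (i : ι) (Y : Set 𝒲) := P i Y ∨ ∀ Z, ctx.IsBlockSubspace Z → Z ⊆ Y → ¬P i Z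
  have hdense (n _ : ℕ) (X : Set 𝒲) (hX : ctx.IsBlockSubspace X) :
      ∃ Y, ctx.IsBlockSubspace Y ∧ Y ⊆ X ∧ Decides (f n) Y := by
    by_cases h : ∃ Z, ctx.IsBlockSubspace Z ∧ Z ⊆ X ∧ P (f n) Z
    · obtain ⟨Z, hZ, hZX, hPZ⟩ := h
      exact ⟨Z, hZ, hZX, .inl hPZ⟩
    · push Not at h
      exact ⟨X, hX, subset_rfl, .inr h⟩
  obtain ⟨X, hX, hXX₀, hdec⟩ := exists_diagonal hdense hX₀
  refine ⟨X, hX, hXX₀, Set.forall_mem_range.2 fun n => ?_⟩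
  obtain ⟨N, Y, hY, hPY | hPY, hXY⟩ := hdec n
  · exact .inl (hP _ ⟨n, rfl⟩ X Y hX hY ⟨N, hXY⟩ hPY)
  · refine .inr fun Z hZ hZX hPZ => ?_
    have hZY : ctx.AlmostSubset Z Y := ⟨N, (Set.inter_subset_inter_left _ hZX).trans hXY⟩
    obtain ⟨Z', hZ', hZ'ZY⟩ := hZY.exists_isBlockSubspace_subset_inter hZ
    have hZ'Z : Z' ⊆ Z := hZ'ZY.trans Set.inter_subset_left
    exact hPY Z' hZ' (hZ'ZY.trans Set.inter_subset_right)
      (hP _ ⟨n, rfl⟩ Z' Z hZ' hZ (.of_subset hZ'Z) hPZ)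

end Diagonalization

section Positions

variable (ctx : Frame 𝒲)

/-- Player II wins `F^·_X` with outcome in `S` from the position where I has just declared the
ordinal `β`, the subspaces played so far span `F` and the vectors played so far are `v`. -/
def IIStratFFrom (X : Set 𝒲) (β : Ordinal) (S : Set (List 𝒲)) (F : Set 𝒲) (v : List 𝒲) : Prop :=
  (β = 0 → v ∈ S) ∧ (β ≠ 0 → ctx.IIWinsF X S β F v)

/-- Player I wins `F^·_X` with outcome in `S` from the position where he has just declared the
ordinal `β`, the subspaces played so far span `F` and the vectors played so far are `v`. -/
def IStratFFrom (X : Set 𝒲) (β : Ordinal) (S : Set (List 𝒲)) (F : Set 𝒲) (v : List 𝒲) : Prop :=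
  (β = 0 → v ∈ S) ∧ (β ≠ 0 → ctx.IWinsF X S β F v)

/-- Player II wins `G^·_X` with outcome in `S` from the position where I has just declared the
ordinal `β`, the subspaces played so far span `F` and the vectors played so far are `v`. -/
def IIStratGFrom (X : Set 𝒲) (β : Ordinal) (S : Set (List 𝒲)) (F : Set 𝒲) (v : List 𝒲) : Prop :=
  (β = 0 → v ∈ S) ∧ (β ≠ 0 → ctx.IIWinsG X S β F v)

/-- Player II wins `A^·_X` with outcome in `S` from the position where the ordinal `β` has just
been declared, the subspaces played so far by I and II span `E` and `F`, and the vectors played so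
far are `v`. -/
def IIStratAFrom (X : Set 𝒲) (β : Ordinal) (S : Set (List 𝒲)) (E F : Set 𝒲) (v : List 𝒲) : Prop :=
  (β = 0 → v ∈ S) ∧ (β ≠ 0 → ctx.IIWinsA X S β E F v)

/-- Player I wins `B^·_X` with outcome in `S` from the position where the ordinal `β` has just
been declared, the subspaces played so far by I and II span `E` and `F`, and the vectors played so
far are `v`. -/
def IStratBFrom (X : Set 𝒲) (β : Ordinal) (S : Set (List 𝒲)) (E F : Set 𝒲) (v : List 𝒲) : Prop :=
  (β = 0 → v ∈ S) ∧ (β ≠ 0 → ctx.IWinsB X S β E F v)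

variable {ctx} {X : Set 𝒲} {β : Ordinal} {S : Set (List 𝒲)} {E F : Set 𝒲} {v : List 𝒲}

theorem iiStratFFrom_zero : ctx.IIStratFFrom X 0 S F v ↔ v ∈ S := by
  simp [IIStratFFrom]

theorem iiStratFFrom_iff (hβ : β ≠ 0) : ctx.IIStratFFrom X β S F v ↔
    ∀ (n : ℕ), ∀ ξ < β, ∃ F', ctx.IsFinDimIn F' X ∧ ctx.NatLt n F' ∧
      ∃ x, x ≠ 0 ∧ x ∈ ctx.fspan (F ∪ F') ∧
        ctx.IIStratFFrom X ξ S (ctx.fspan (F ∪ F')) (v ++ [x]) := by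
  simp only [IIStratFFrom, hβ, false_imp_iff, ne_eq, not_false_eq_true, true_imp_iff, true_and]
  conv_lhs => unfold IIWinsF
  rw [WellFounded.fix_eq]
  rfl

theorem iStratFFrom_zero : ctx.IStratFFrom X 0 S F v ↔ v ∈ S := by
  simp [IStratFFrom]

theorem iStratFFrom_iff (hβ : β ≠ 0) : ctx.IStratFFrom X β S F v ↔
    ∃ n : ℕ, ∃ ξ < β, ∀ F', ctx.IsFinDimIn F' X → ctx.NatLt n F' →
      ∀ x, x ≠ 0 → x ∈ ctx.fspan (F ∪ F') →
        ctx.IStratFFrom X ξ S (ctx.fspan (F ∪ F')) (v ++ [x]) := by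
  simp only [IStratFFrom, hβ, false_imp_iff, ne_eq, not_false_eq_true, true_imp_iff, true_and]
  conv_lhs => unfold IWinsF
  rw [WellFounded.fix_eq]
  simp only [exists_prop]
  rfl

theorem iiStratGFrom_zero : ctx.IIStratGFrom X 0 S F v ↔ v ∈ S := by
  simp [IIStratGFrom]

theorem iiStratGFrom_iff (hβ : β ≠ 0) : ctx.IIStratGFrom X β S F v ↔
    ∀ Y, ctx.IsBlockSubspaceOf Y X → ∀ ξ < β, ∃ F', ctx.IsFinDimIn F' Y ∧
      ∃ x, x ≠ 0 ∧ x ∈ ctx.fspan (F ∪ F') ∧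
        ctx.IIStratGFrom X ξ S (ctx.fspan (F ∪ F')) (v ++ [x]) := by
  simp only [IIStratGFrom, hβ, false_imp_iff, ne_eq, not_false_eq_true, true_imp_iff, true_and]
  conv_lhs => unfold IIWinsG
  rw [WellFounded.fix_eq]
  rfl

theorem iiStratAFrom_zero : ctx.IIStratAFrom X 0 S E F v ↔ v ∈ S := by
  simp [IIStratAFrom]

theorem iiStratAFrom_iff (hβ : β ≠ 0) : ctx.IIStratAFrom X β S E F v ↔
    ∃ n : ℕ, ∀ E', ctx.IsFinDimIn E' X → ctx.NatLt n E' →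
      ∀ x, x ≠ 0 → x ∈ ctx.fspan (E ∪ E') →
      ∀ Y, ctx.IsBlockSubspaceOf Y X → ∀ ξ < β, ∃ F', ctx.IsFinDimIn F' Y ∧
        ∃ y, y ≠ 0 ∧ y ∈ ctx.fspan (F ∪ F') ∧
          ctx.IIStratAFrom X ξ S (ctx.fspan (E ∪ E')) (ctx.fspan (F ∪ F')) (v ++ [x, y]) := by
  simp only [IIStratAFrom, hβ, false_imp_iff, ne_eq, not_false_eq_true, true_imp_iff, true_and]
  conv_lhs => unfold IIWinsA
  rw [WellFounded.fix_eq]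
  rfl

theorem iStratBFrom_zero : ctx.IStratBFrom X 0 S E F v ↔ v ∈ S := by
  simp [IStratBFrom]

theorem iStratBFrom_iff (hβ : β ≠ 0) : ctx.IStratBFrom X β S E F v ↔
    ∀ Y, ctx.IsBlockSubspaceOf Y X → ∃ E', ctx.IsFinDimIn E' Y ∧
      ∃ x, x ≠ 0 ∧ x ∈ ctx.fspan (E ∪ E') ∧ ∃ n : ℕ, ∃ ξ < β,
        ∀ F', ctx.IsFinDimIn F' X → ctx.NatLt n F' → ∀ y, y ≠ 0 → y ∈ ctx.fspan (F ∪ F') →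
          ctx.IStratBFrom X ξ S (ctx.fspan (E ∪ E')) (ctx.fspan (F ∪ F')) (v ++ [x, y]) := by
  simp only [IStratBFrom, hβ, false_imp_iff, ne_eq, not_false_eq_true, true_imp_iff, true_and]
  conv_lhs => unfold IWinsB
  rw [WellFounded.fix_eq]
  simp only [exists_prop]
  rfl

end Positions

section Monotonicity

variable {ctx : Frame 𝒲}
  {X X' : Set 𝒲} {β : Ordinal} {S S' : Set (List 𝒲)} {E F : Set 𝒲} {v : List 𝒲}

theorem iiStratFFrom_of_not_iStratFFrom (h : ¬ctx.IStratFFrom X β Sᶜ F v) :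
    ctx.IIStratFFrom X β S F v := by
  induction β using WellFoundedLT.induction generalizing F v with | ind β ih =>
  obtain rfl | hβ := eq_or_ne β 0
  · rwa [iStratFFrom_zero, Set.mem_compl_iff, not_not, ← iiStratFFrom_zero] at h
  rw [iStratFFrom_iff hβ] at h
  push Not at h
  rw [iiStratFFrom_iff hβ]
  intro n ξ hξ
  obtain ⟨F', hF', hn, x, hx, hxF, hlose⟩ := h n ξ hξ
  exact ⟨F', hF', hn, x, hx, hxF, ih ξ hξ hlose⟩

theorem iiStratF_of_not_iStratF (h : ¬ctx.IStratF X β Sᶜ) : ctx.IIStratF X β S :=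
  iiStratFFrom_of_not_iStratFFrom h

theorem exists_isFinDimIn_of_almostSubset (h : ctx.AlmostSubset X' X)
    (hX' : ctx.IsBlockSubspace X') (n : ℕ) :
    ∃ N, ∀ F, ctx.IsFinDimIn F X' → ctx.NatLt N F → ctx.IsFinDimIn F X ∧ ctx.NatLt n F := by
  obtain ⟨M, hM⟩ := h
  refine ⟨max n M, fun F hF hFn => ?_⟩
  rw [natLt_iff_subset_supported] at hFn
  refine ⟨hF.of_subset fun z hz => hM ⟨hF.subset hX' hz, ctx.supported_mono ?_ (hFn hz)⟩,
    ctx.natLt_iff_subset_supported.2 (hFn.trans (ctx.supported_mono ?_))⟩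
  · exact fun i (hi : max n M < i) => (le_max_right n M).trans hi.le
  · exact Set.Ioi_subset_Ioi (le_max_left n M)

theorem IStratFFrom.mono (h : ctx.IStratFFrom X β S F v) (hX' : ctx.IsBlockSubspace X')
    (hX'X : ctx.AlmostSubset X' X) (hS : S ⊆ S') : ctx.IStratFFrom X' β S' F v := by
  induction β using WellFoundedLT.induction generalizing F v with | ind β ih =>
  obtain rfl | hβ := eq_or_ne β 0
  · rw [iStratFFrom_zero] at h ⊢
    exact hS h
  rw [iStratFFrom_iff hβ] at h ⊢
  obtain ⟨n, ξ, hξ, h⟩ := h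
  obtain ⟨N, hN⟩ := exists_isFinDimIn_of_almostSubset hX'X hX' n
  refine ⟨N, ξ, hξ, fun F' hF' hNF' x hx hxF => ih ξ hξ ?_⟩
  obtain ⟨hF'X, hnF'⟩ := hN F' hF' hNF'
  exact h F' hF'X hnF' x hx hxF

theorem IIStratAFrom.mono (h : ctx.IIStratAFrom X β S E F v) (hX : ctx.IsBlockSubspace X)
    (hX' : ctx.IsBlockSubspace X') (hX'X : ctx.AlmostSubset X' X) :
    ctx.IIStratAFrom X' β S E F v := by
  induction β using WellFoundedLT.induction generalizing E F v with | ind β ih =>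
  obtain rfl | hβ := eq_or_ne β 0
  · rwa [iiStratAFrom_zero] at h ⊢
  rw [iiStratAFrom_iff hβ] at h ⊢
  obtain ⟨n, h⟩ := h
  obtain ⟨N, hN⟩ := exists_isFinDimIn_of_almostSubset hX'X hX' n
  refine ⟨N, fun E' hE' hNE' x hx hxE Y hY ξ hξ => ?_⟩
  obtain ⟨hE'X, hnE'⟩ := hN E' hE' hNE'
  obtain ⟨hYblock, hYX'⟩ := (isBlockSubspaceOf_iff hX').1 hY
  have hYX : ctx.AlmostSubset Y X := hX'X.imp fun _ => (Set.inter_subset_inter_left _ hYX').trans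
  obtain ⟨Z, hZ, hZYX⟩ := hYX.exists_isBlockSubspace_subset_inter hYblock
  obtain ⟨F', hF', y, hy, hyF, hwin⟩ := h E' hE'X hnE' x hx hxE Z
    ((isBlockSubspaceOf_iff hX).2 ⟨hZ, hZYX.trans Set.inter_subset_right⟩) ξ hξ
  exact ⟨F', hF'.mono (hZYX.trans Set.inter_subset_left), y, hy, hyF, ih ξ hξ hwin⟩

end Monotonicity

end Frame

theorem countable_Iic_of_lt_aleph_one_ord {α : Ordinal} (hα : α < (Cardinal.aleph 1).ord) :
    (Set.Iic α).Countable := by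
  rw [← Set.Iio_insert]
  refine Set.Countable.insert _ ?_
  rw [← Cardinal.le_aleph0_iff_set_countable, Cardinal.mk_Iio_ordinal, Cardinal.lift_le_aleph0,
    ← Cardinal.lt_aleph_one_iff]
  exact Cardinal.lt_ord.1 hα

namespace Frame

section Ramsey

variable {ctx : Frame 𝒲}
  {X X₀ X₁ X₂ Y Z Z' : Set 𝒲} {α β ξ : Ordinal} {S : Set (List 𝒲)} {E E' F F' : Set 𝒲}
  {v : List 𝒲} {x y : 𝒲}

variable (ctx) in
theorem countable_W : ctx.W.Countable := by
  have : Countable ctx.𝔽 := ctx.countable.to_subtype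
  rw [W, fspan_eq_span, ← Set.countable_coe_iff]
  exact inferInstanceAs (Countable (Submodule.span ctx.𝔽 (Set.range ctx.e)))

variable (ctx) in
theorem countable_setOf_isFinDimIn_W : {F | ctx.IsFinDimIn F ctx.W}.Countable := by
  refine ((Set.countable_ofPred_finite_subset ctx.countable_W).image ctx.fspan).mono ?_
  rintro F ⟨t, ht, rfl⟩
  exact ⟨t, ⟨t.finite_toSet, ht⟩, rfl⟩

/-- The positions `(β, E, F, v)` that occur in the adversarial games with ordinals at most `α`. -/
def positions (ctx : Frame 𝒲) (α : Ordinal) : Set (Ordinal × Set 𝒲 × Set 𝒲 × List 𝒲) :=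
  Set.Iic α ×ˢ {E | ctx.IsFinDimIn E ctx.W} ×ˢ {F | ctx.IsFinDimIn F ctx.W} ×ˢ
    {v | ∀ x ∈ v, x ∈ ctx.W}

theorem countable_positions (hα : (Set.Iic α).Countable) : (ctx.positions α).Countable := by
  have : Countable ctx.W := ctx.countable_W.to_subtype
  have hlist : {v : List 𝒲 | ∀ x ∈ v, x ∈ ctx.W}.Countable := by
    exact Set.range_list_map_coe ctx.W ▸ Set.countable_range _
  exact hα.prod (ctx.countable_setOf_isFinDimIn_W.prod
    (ctx.countable_setOf_isFinDimIn_W.prod hlist))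

theorem positions_left (h : (β, E, F, v) ∈ ctx.positions α) (hξ : ξ ≤ β)
    (hE' : ctx.IsFinDimIn E' ctx.W) (hx : x ∈ ctx.fspan (E ∪ E')) :
    (ξ, ctx.fspan (E ∪ E'), F, v ++ [x]) ∈ ctx.positions α := by
  obtain ⟨hβ, hE, hF, hv⟩ := h
  refine ⟨hξ.trans hβ, hE.union hE', hF, List.forall_mem_append.2 ⟨hv, ?_⟩⟩
  exact List.forall_mem_singleton.2 ((hE.union hE').subset ctx.isBlockSubspace_W hx)

theorem positions_right (h : (β, E, F, v) ∈ ctx.positions α)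
    (hF' : ctx.IsFinDimIn F' ctx.W) (hy : y ∈ ctx.fspan (F ∪ F')) :
    (β, E, ctx.fspan (F ∪ F'), v ++ [y]) ∈ ctx.positions α := by
  obtain ⟨hβ, hE, hF, hv⟩ := h
  refine ⟨hβ, hE, hF.union hF', List.forall_mem_append.2 ⟨hv, ?_⟩⟩
  exact List.forall_mem_singleton.2 ((hF.union hF').subset ctx.isBlockSubspace_W hy)

/-- Player II, to answer I's last vector in `v`, has no move far out in `Z` after which she wins
`A^ξ_X` with outcome in `S`. -/
def IEscapesA (ctx : Frame 𝒲) (X : Set 𝒲) (S : Set (List 𝒲)) (Z : Set 𝒲) (ξ : Ordinal)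
    (E F : Set 𝒲) (v : List 𝒲) : Prop :=
  ∃ N : ℕ, ∀ F', ctx.IsFinDimIn F' Z → ctx.NatLt N F' → ∀ y, y ≠ 0 → y ∈ ctx.fspan (F ∪ F') →
    ¬ctx.IIStratAFrom X ξ S E (ctx.fspan (F ∪ F')) (v ++ [y])

theorem IEscapesA.mono (h : ctx.IEscapesA X S Z ξ E F v) (hZ' : ctx.IsBlockSubspace Z')
    (hZ'Z : ctx.AlmostSubset Z' Z) : ctx.IEscapesA X S Z' ξ E F v := by
  obtain ⟨n, h⟩ := h
  obtain ⟨N, hN⟩ := exists_isFinDimIn_of_almostSubset hZ'Z hZ' n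
  refine ⟨N, fun F' hF' hNF' => ?_⟩
  obtain ⟨hF'Z, hnF'⟩ := hN F' hF' hNF'
  exact h F' hF'Z hnF'

theorem exists_iEscapesA_of_not_iiStratAFrom (hβ : β ≠ 0) (hX : ctx.IsBlockSubspace X)
    (hY : ctx.IsBlockSubspace Y) (hYX : Y ⊆ X) (h : ¬ctx.IIStratAFrom Y β S E F v) :
    ∃ E', ctx.IsFinDimIn E' Y ∧ ∃ x, x ≠ 0 ∧ x ∈ ctx.fspan (E ∪ E') ∧
      ∃ ξ < β, ∃ Z, ctx.IsBlockSubspace Z ∧ Z ⊆ Y ∧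
        ctx.IEscapesA X S Z ξ (ctx.fspan (E ∪ E')) F (v ++ [x]) := by
  rw [iiStratAFrom_iff hβ] at h
  push Not at h
  obtain ⟨E', hE', -, x, hx, hxE', Z, hZ, ξ, hξ, hlose⟩ := h 0
  obtain ⟨hZ, hZY⟩ := (isBlockSubspaceOf_iff hY).1 hZ
  refine ⟨E', hE', x, hx, hxE', ξ, hξ, Z, hZ, hZY, 0, fun F' hF' _ y hy hyF' hwin => ?_⟩
  refine hlose F' hF' y hy hyF' ?_
  simpa using hwin.mono hX hY (.of_subset hYX)

theorem iStratBFrom_of_not_iiStratAFrom (hX₁ : ctx.IsBlockSubspace X₁)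
    (hX₂ : ctx.IsBlockSubspace X₂) (hX₂X₁ : X₂ ⊆ X₁)
    (hA : ∀ p ∈ ctx.positions α, ctx.IIStratAFrom X₁ p.1 S p.2.1 p.2.2.1 p.2.2.2 ∨
      ∀ Z, ctx.IsBlockSubspace Z → Z ⊆ X₁ → ¬ctx.IIStratAFrom Z p.1 S p.2.1 p.2.2.1 p.2.2.2)
    (hesc : ∀ p ∈ ctx.positions α, ctx.IEscapesA X₁ S X₂ p.1 p.2.1 p.2.2.1 p.2.2.2 ∨
      ∀ Z, ctx.IsBlockSubspace Z → Z ⊆ X₂ → ¬ctx.IEscapesA X₁ S Z p.1 p.2.1 p.2.2.1 p.2.2.2)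
    (hp : (β, E, F, v) ∈ ctx.positions α) (h : ¬ctx.IIStratAFrom X₁ β S E F v) :
    ctx.IStratBFrom X₂ β Sᶜ E F v := by
  induction β using WellFoundedLT.induction generalizing E F v with | ind β ih =>
  obtain rfl | hβ := eq_or_ne β 0
  · rwa [iiStratAFrom_zero, ← Set.mem_compl_iff, ← iStratBFrom_zero] at h
  rw [iStratBFrom_iff hβ]
  intro Y hY
  obtain ⟨hY, hYX₂⟩ := (isBlockSubspaceOf_iff hX₂).1 hY
  have hYX₁ := hYX₂.trans hX₂X₁
  obtain ⟨E', hE', x, hx, hxE', ξ, hξ, Z, hZ, hZY, hZesc⟩ :=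
    exists_iEscapesA_of_not_iiStratAFrom hβ hX₁ hY hYX₁ ((hA _ hp).resolve_left h Y hY hYX₁)
  have hp' := positions_left hp hξ.le (hE'.mono hY.subset_W) hxE'
  obtain ⟨N, hN⟩ := (hesc _ hp').resolve_right fun hno => hno Z hZ (hZY.trans hYX₂) hZesc
  refine ⟨E', hE', x, hx, hxE', N, ξ, hξ, fun F' hF' hNF' y hy hyF' => ?_⟩
  have hp'' := positions_right hp' (hF'.mono hX₂.subset_W) hyF'
  simpa using ih ξ hξ hp'' (hN F' hF' hNF' y hy hyF')

-- `X₁` decides, for each of the countably many positions, whether II wins `A` from it. `X₂ ⊆ X₁`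
-- then decides whether I escapes, so that a move of I which defeats II in `A` while she is confined
-- to some `Z ⊆ X₂` also defeats her when she plays anywhere far out in `X₂`, as she does in `B`.
theorem exists_iiStratA_or_iStratB (hα : (Set.Iic α).Countable) (S : Set (List 𝒲))
    (hX₀ : ctx.IsBlockSubspace X₀) :
    ∃ X, ctx.IsBlockSubspace X ∧ X ⊆ X₀ ∧ (ctx.IIStratA X α S ∨ ctx.IStratB X α Sᶜ) := by
  have hI := countable_positions (ctx := ctx) hα
  obtain ⟨X₁, hX₁, hX₁X₀, hA⟩ := exists_deciding hI
    (P := fun p Y => ctx.IIStratAFrom Y p.1 S p.2.1 p.2.2.1 p.2.2.2)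
    (fun _ _ _ _ hX hY hXY h => h.mono hY hX hXY) hX₀
  obtain ⟨X₂, hX₂, hX₂X₁, hesc⟩ := exists_deciding hI
    (P := fun p Z => ctx.IEscapesA X₁ S Z p.1 p.2.1 p.2.2.1 p.2.2.2)
    (fun _ _ _ _ hX _ hXY h => h.mono hX hXY) hX₁
  by_cases hwin : ctx.IIStratA X₁ α S
  · exact ⟨X₁, hX₁, hX₁X₀, .inl hwin⟩
  · refine ⟨X₂, hX₂, hX₂X₁.trans hX₁X₀, .inr ?_⟩
    have hp : (α, ctx.fspan ∅, ctx.fspan ∅, []) ∈ ctx.positions α :=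
      ⟨Set.mem_Iic.2 le_rfl, isFinDimIn_fspan_empty _, isFinDimIn_fspan_empty _, by simp⟩
    exact iStratBFrom_of_not_iiStratAFrom hX₁ hX₂ hX₂X₁ hA hesc hp hwin

end Ramsey

end Frame

section Interleave

variable {A : Type*}

theorem forall_getD_concat {P : ℕ → A → Prop} {l : List A} {a d : A}
    (hl : ∀ i < l.length, P i (l.getD i d)) (ha : P l.length a) :
    ∀ i < (l ++ [a]).length, P i ((l ++ [a]).getD i d) := by
  intro i hi
  rw [List.length_append, List.length_singleton, Nat.lt_succ_iff_lt_or_eq] at hi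
  obtain hi | rfl := hi
  · rw [List.getD_append _ _ _ _ hi]
    exact hl i hi
  · simpa using ha

variable (ps : List (A × A))

/-- The list `u 0, v 0, u 1, v 1, …` of the entries of the pairs `(u i, v i)`, i.e. the outcome of
an adversarial game in which the players played these vectors. -/
def interleave : List A := ps.flatMap fun p => [p.1, p.2]

theorem interleave_concat (p : A × A) :
    interleave (ps ++ [p]) = interleave ps ++ [p.1, p.2] := by
  simp [interleave]

theorem length_interleave : (interleave ps).length = 2 * ps.length := by
  induction ps with
  | nil => rfl
  | cons p ps ih =>
    simp only [interleave, List.flatMap_cons, List.length_append, List.length_cons] at ih ⊢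
    simp only [ih, List.length_nil]
    ring

theorem getD_interleave (d : A × A) (i : ℕ) :
    (interleave ps).getD (2 * i) d.1 = (ps.getD i d).1 ∧
      (interleave ps).getD (2 * i + 1) d.2 = (ps.getD i d).2 := by
  induction ps generalizing i with
  | nil => simp [interleave]
  | cons p ps ih =>
    cases i with
    | zero => simp [interleave]
    | succ i => simpa [interleave, mul_add] using ih i

end Interleave

section Equivalence

variable {K L : ℝ} {k n : ℕ} {x y z x' y' : ℕ → 𝒲} {v w : List 𝒲}

theorem seqEquiv_iff (hK : 0 < K) : SeqEquiv K k x y ↔ ∀ a : ℕ → ℝ,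
    ‖∑ i ∈ Finset.range k, a i • x i‖ ≤ K * ‖∑ i ∈ Finset.range k, a i • y i‖ ∧
    ‖∑ i ∈ Finset.range k, a i • y i‖ ≤ K * ‖∑ i ∈ Finset.range k, a i • x i‖ := by
  simp only [SeqEquiv, one_div, inv_mul_le_iff₀ hK]

theorem SeqEquiv.symm (hK : 0 < K) (h : SeqEquiv K k x y) : SeqEquiv K k y x := by
  rw [seqEquiv_iff hK] at h ⊢
  exact fun a => (h a).symm

theorem SeqEquiv.trans (hK : 0 < K) (hL : 0 < L) (hxy : SeqEquiv K k x y)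
    (hyz : SeqEquiv L k y z) : SeqEquiv (K * L) k x z := by
  rw [seqEquiv_iff hK] at hxy
  rw [seqEquiv_iff hL] at hyz
  rw [seqEquiv_iff (mul_pos hK hL)]
  refine fun a => ⟨?_, ?_⟩
  · rw [mul_assoc]
    exact (hxy a).1.trans (by gcongr; exact (hyz a).1)
  · rw [mul_comm K, mul_assoc]
    exact (hyz a).2.trans (by gcongr; exact (hxy a).2)

theorem SeqEquiv.mono (hK : 0 < K) (hKL : K ≤ L) (h : SeqEquiv K k x y) : SeqEquiv L k x y := by
  rw [seqEquiv_iff hK] at h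
  rw [seqEquiv_iff (hK.trans_le hKL)]
  exact fun a => ⟨(h a).1.trans (by gcongr), (h a).2.trans (by gcongr)⟩

theorem SeqEquiv.of_le (h : SeqEquiv K n x y) (hk : k ≤ n) : SeqEquiv K k x y := by
  intro a
  have hfilter : {i ∈ Finset.range n | i < k} = Finset.range k := by
    ext i
    simp only [Finset.mem_filter, Finset.mem_range]
    lia
  have hcut (z : ℕ → 𝒲) : ∑ i ∈ Finset.range n, (if i < k then a i else 0) • z i =
      ∑ i ∈ Finset.range k, a i • z i := by
    simp only [ite_smul, zero_smul, ← Finset.sum_filter, hfilter]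
  simpa only [hcut] using h fun i => if i < k then a i else 0

theorem SeqEquiv.congr (h : SeqEquiv K k x y) (hx : ∀ i < k, x i = x' i)
    (hy : ∀ i < k, y i = y' i) : SeqEquiv K k x' y' := by
  intro a
  have hcongr {z z' : ℕ → 𝒲} (hz : ∀ i < k, z i = z' i) :
      ∑ i ∈ Finset.range k, a i • z i = ∑ i ∈ Finset.range k, a i • z' i :=
    Finset.sum_congr rfl fun i hi => by rw [hz i (Finset.mem_range.1 hi)]
  simpa only [hcongr hx, hcongr hy] using h a

theorem OutcomeEquiv.of_append (h : OutcomeEquiv K (v ++ w) y) : OutcomeEquiv K v y :=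
  (SeqEquiv.of_le h (by simp)).congr (fun _ hi => List.getD_append _ _ _ _ hi) fun _ _ => rfl

/-- The graph of the linear relation `y i ↦ v i`, `i < v.length`, which copies the linear
combinations of `y 0, …, y (v.length - 1)` to the corresponding combinations of `v`. -/
def copyRel (y : ℕ → 𝒲) (v : List 𝒲) : Submodule ℝ (𝒲 × 𝒲) :=
  Submodule.span ℝ ((fun i => (y i, v.getD i 0)) '' Set.Iio v.length)

theorem copyRel_le_append : copyRel y v ≤ copyRel y (v ++ w) := by
  refine Submodule.span_mono ?_
  rintro _ ⟨i, hi : i < v.length, rfl⟩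
  refine ⟨i, hi.trans_le (by simp), ?_⟩
  simp only [List.getD_append _ _ _ _ hi]

theorem OutcomeEquiv.seqEquiv_of_mem_copyRel (h : OutcomeEquiv K v y)
    (hxz : ∀ i < k, (x i, z i) ∈ copyRel y v) : SeqEquiv K k z x := by
  intro a
  have hmem : ∑ i ∈ Finset.range k, a i • (x i, z i) ∈ copyRel y v :=
    Submodule.sum_mem _ fun i hi => Submodule.smul_mem _ _ (hxz i (Finset.mem_range.1 hi))
  rw [copyRel, ← Finset.coe_range, Submodule.mem_span_image_finset_iff_exists_fun'] at hmem
  obtain ⟨c, hc⟩ := hmem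
  have hfst := congrArg Prod.fst hc
  have hsnd := congrArg Prod.snd hc
  simp only [Prod.fst_sum, Prod.snd_sum, Prod.smul_fst, Prod.smul_snd] at hfst hsnd
  rw [← hfst, ← hsnd]
  exact h c

theorem OutcomeEquiv.ne_zero_of_mem_copyRel {p : 𝒲 × 𝒲} (h : OutcomeEquiv K v y)
    (hp : p ∈ copyRel y v) (hne : p.1 ≠ 0) : p.2 ≠ 0 := by
  intro hp₂
  have hequiv := h.seqEquiv_of_mem_copyRel (k := 1) (x := fun _ => p.1) (z := fun _ => p.2)
    fun _ _ => hp
  have hle := (hequiv fun _ => 1).2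
  simp only [Finset.range_one, Finset.sum_singleton, one_smul, hp₂, norm_zero, mul_zero] at hle
  exact hne (norm_le_zero_iff.1 hle)

theorem pairOutcomeEquiv_interleave {ps : List (𝒲 × 𝒲)} :
    PairOutcomeEquiv K (interleave ps) ↔
      SeqEquiv K ps.length (fun i => (ps.getD i 0).1) fun i => (ps.getD i 0).2 := by
  have h (i : ℕ) := getD_interleave ps 0 i
  simp only [Prod.fst_zero, Prod.snd_zero] at h
  simp only [PairOutcomeEquiv, length_interleave, h, Nat.mul_div_cancel_left _ two_pos]

end Equivalence

namespace Frame

section Simulation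

variable {ctx : Frame 𝒲}
  {X X' E F : Set 𝒲} {β γ ξ : Ordinal} {S : Set (List 𝒲)} {K : ℝ} {v : List 𝒲} {x : 𝒲}
  {y z : ℕ → 𝒲} {ps : List (𝒲 × 𝒲)}

theorem exists_mem_copyRel (hx : x ∈ ctx.fspan (Set.range y)) :
    ∃ M : ℕ, ∀ v : List 𝒲, M ≤ v.length → ∃ u ∈ ctx.fspan {w | w ∈ v}, (x, u) ∈ copyRel y v := by
  rw [fspan_eq_span, SetLike.mem_coe, Finsupp.mem_span_range_iff_exists_finsupp] at hx
  obtain ⟨c, rfl⟩ := hx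
  refine ⟨c.support.sup id + 1, fun v hv => ⟨c.sum fun i a => a • v.getD i 0, ?_, ?_⟩⟩
  all_goals have hlt (i : ℕ) (hi : i ∈ c.support) : i < v.length :=
    (Nat.lt_succ_of_le (Finset.le_sup (f := id) hi)).trans_le hv
  · rw [fspan_eq_span]
    refine Submodule.sum_mem _ fun i hi => Submodule.smul_mem _ _ (Submodule.subset_span ?_)
    rw [List.getD_eq_getElem _ _ (hlt i hi)]
    exact List.getElem_mem _
  · have hpair : (c.sum fun i a => a • y i, c.sum fun i a => a • v.getD i 0) =
        c.sum fun i a => (a : ℝ) • (y i, v.getD i 0) := by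
      ext <;> simp [Finsupp.sum, Prod.fst_sum, Prod.snd_sum, Subfield.smul_def]
    rw [hpair]
    exact Submodule.sum_mem _ fun i hi =>
      Submodule.smul_mem _ _ (Submodule.subset_span ⟨i, hlt i hi, rfl⟩)

theorem IIStratFFrom.outcomeEquiv (h : ctx.IIStratFFrom X β {l | OutcomeEquiv K l y} F v) :
    OutcomeEquiv K v y := by
  obtain rfl | hβ := eq_or_ne β 0
  · exact iiStratFFrom_zero.1 h
  · obtain ⟨_, _, _, x, _, _, hx⟩ := (iiStratFFrom_iff hβ).1 h 0 0 (pos_iff_ne_zero.2 hβ)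
    exact OutcomeEquiv.of_append (iiStratFFrom_zero.1 hx)

theorem IIStratFFrom.exists_multi_round {M : ℕ} (h : ctx.IIStratFFrom X β S F v)
    (hβ : γ + M < β) (n : ℕ) :
    ∃ F', ctx.IsFinDimIn F' X ∧ ctx.NatLt n F' ∧ ∃ w : List 𝒲, M ≤ w.length ∧
      {x | x ∈ w} ⊆ ctx.fspan (F ∪ F') ∧
      ctx.IIStratFFrom X γ S (ctx.fspan (F ∪ F')) (v ++ w) := by
  induction M generalizing β F v with
  | zero =>
    rw [Nat.cast_zero, add_zero] at hβ
    obtain ⟨F', hF', hnF', x, -, hx, hwin⟩ := (iiStratFFrom_iff (bot_lt_of_lt hβ).ne').1 h n _ hβ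
    exact ⟨F', hF', hnF', [x], Nat.zero_le _, by simpa using hx, hwin⟩
  | succ M ih =>
    have hlt : γ + (M : Ordinal) < γ + ((M + 1 : ℕ) : Ordinal) := by
      gcongr
      exact M.lt_succ_self
    obtain ⟨F₁, hF₁, hnF₁, x, -, hx, h₁⟩ := (iiStratFFrom_iff (bot_lt_of_lt hβ).ne').1 h n _ hβ
    obtain ⟨F₂, hF₂, hnF₂, w, hw, hwF₂, hwin⟩ := ih h₁ hlt
    rw [fspan_fspan_union, Set.union_assoc, ← fspan_union_fspan] at hwF₂ hwin
    refine ⟨_, hF₁.union hF₂, ?_, x :: w, by simpa using hw, ?_, by simpa using hwin⟩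
    · rw [natLt_iff_subset_supported] at *
      exact ctx.fspan_subset_supported (Set.union_subset hnF₁ hnF₂)
    · rw [fspan_union_fspan] at hwF₂ ⊢
      refine fun z hz => (List.mem_cons.1 hz).elim ?_ fun hz => hwF₂ hz
      rintro rfl
      exact ctx.fspan_mono (Set.union_subset_union_right _ Set.subset_union_left) hx

theorem IIStratFFrom.exists_copy_round
    (h : ctx.IIStratFFrom X (Ordinal.omega0 * β) {l | OutcomeEquiv K l y} F v) (hξ : ξ < β) (n : ℕ)
    (hv : {x | x ∈ v} ⊆ F) (hx : x ≠ 0) (hxy : x ∈ ctx.fspan (Set.range y)) :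
    ∃ F', ctx.IsFinDimIn F' X ∧ ctx.NatLt n F' ∧ ∃ w : List 𝒲,
      {x | x ∈ v ++ w} ⊆ ctx.fspan (F ∪ F') ∧
      ctx.IIStratFFrom X (Ordinal.omega0 * ξ) {l | OutcomeEquiv K l y} (ctx.fspan (F ∪ F'))
        (v ++ w) ∧
      ∃ u, u ≠ 0 ∧ u ∈ ctx.fspan (F ∪ F') ∧ (x, u) ∈ copyRel y (v ++ w) := by
  obtain ⟨M, hM⟩ := exists_mem_copyRel hxy
  have hlt : Ordinal.omega0 * ξ + M < Ordinal.omega0 * β :=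
    calc Ordinal.omega0 * ξ + M < Ordinal.omega0 * ξ + Ordinal.omega0 := by
          gcongr
          exact Ordinal.natCast_lt_omega0 M
      _ = Ordinal.omega0 * Order.succ ξ := (Ordinal.mul_succ _ _).symm
      _ ≤ Ordinal.omega0 * β := by
          gcongr
          exact Order.succ_le_of_lt hξ
  obtain ⟨F', hF', hnF', w, hw, hwF', hwin⟩ := h.exists_multi_round hlt n
  obtain ⟨u, huw, hu⟩ := hM (v ++ w) (by simpa using le_add_left hw)
  have hvw : {x | x ∈ v ++ w} ⊆ ctx.fspan (F ∪ F') := fun z hz =>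
    (List.mem_append.1 hz).elim (fun hz => ctx.subset_fspan _ (.inl (hv hz))) fun hz => hwF' hz
  exact ⟨F', hF', hnF', w, hvw, hwin, u, hwin.outcomeEquiv.ne_zero_of_mem_copyRel hu hx,
    ctx.fspan_subset_fspan hvw huw, hu⟩

theorem not_iStratBFrom_of_iiStratFFrom (hK : 0 < K) (hy : ctx.IsBlockSeq y) (hyX : ∀ n, y n ∈ X)
    (hE : E ⊆ ctx.fspan (Set.range y)) (hv : {x | x ∈ v} ⊆ F)
    (hps : ∀ i < ps.length, ps.getD i 0 ∈ copyRel y v)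
    (h : ctx.IIStratFFrom X (Ordinal.omega0 * β) {l | OutcomeEquiv K l y} F v) :
    ¬ctx.IStratBFrom X β {l | PairOutcomeEquiv K l}ᶜ E F (interleave ps) := by
  induction β using WellFoundedLT.induction generalizing E F v ps with | ind β ih =>
  intro hB
  obtain rfl | hβ := eq_or_ne β 0
  · refine iStratBFrom_zero.1 hB (pairOutcomeEquiv_interleave.2 ?_)
    exact (h.outcomeEquiv.seqEquiv_of_mem_copyRel hps).symm hK
  obtain ⟨E', hE', x, hx, hxE', n, ξ, hξ, hB⟩ :=
    (iStratBFrom_iff hβ).1 hB _ ⟨y, hy, hyX, rfl⟩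
  have hEE' : ctx.fspan (E ∪ E') ⊆ ctx.fspan (Set.range y) :=
    ctx.fspan_subset_fspan (Set.union_subset hE (hE'.subset hy.isBlockSubspace))
  obtain ⟨F', hF', hnF', w, hvw, hwin, u, hu, huF', hxu⟩ :=
    h.exists_copy_round hξ n hv hx (hEE' hxE')
  have hps' : ∀ i < (ps ++ [(x, u)]).length, (ps ++ [(x, u)]).getD i 0 ∈ copyRel y (v ++ w) :=
    forall_getD_concat (fun i hi => copyRel_le_append (hps i hi)) hxu
  refine ih ξ hξ hEE' hvw hps' hwin ?_
  rw [interleave_concat]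
  exact hB F' hF' hnF' u hu huF'

theorem iiStratGFrom_of_iiStratFFrom_of_iiStratAFrom (hK : 0 < K) (hX'X : X' ⊆ X)
    (hz : ∀ n, z n ≠ 0) (hzy : ∀ n, z n ∈ ctx.fspan (Set.range y)) (hv : {x | x ∈ v} ⊆ E)
    (hps : ∀ i < ps.length, (z i, (ps.getD i 0).1) ∈ copyRel y v)
    (hF : ctx.IIStratFFrom X (Ordinal.omega0 * β) {l | OutcomeEquiv K l y} E v)
    (hA : ctx.IIStratAFrom X β {l | PairOutcomeEquiv K l} E F (interleave ps)) :
    ctx.IIStratGFrom X' β {l | OutcomeEquiv (K * K) l z} F (ps.map Prod.snd) := by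
  induction β using WellFoundedLT.induction generalizing E F v ps with | ind β ih =>
  obtain rfl | hβ := eq_or_ne β 0
  · have hu := hF.outcomeEquiv.seqEquiv_of_mem_copyRel hps
    have hpair := (pairOutcomeEquiv_interleave.1 (iiStratAFrom_zero.1 hA)).symm hK
    rw [iiStratGFrom_zero, Set.mem_ofPred_eq, OutcomeEquiv, List.length_map]
    refine (hpair.trans hK hK hu).congr (fun i _ => ?_) fun _ _ => rfl
    exact (List.getD_map ps 0 Prod.snd).symm
  rw [iiStratGFrom_iff hβ]
  intro Y ⟨b, hb, hbX', hY⟩ ξ hξ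
  obtain ⟨n, hA⟩ := (iiStratAFrom_iff hβ).1 hA
  obtain ⟨E', hE', hnE', w, hvw, hwin, u, hu, huE', hzu⟩ :=
    hF.exists_copy_round hξ n hv (hz ps.length) (hzy ps.length)
  obtain ⟨F', hF', g, hg, hgF', hwinA⟩ :=
    hA E' hE' hnE' u hu huE' Y ⟨b, hb, fun n => hX'X (hbX' n), hY⟩ ξ hξ
  have hps' : ∀ i < (ps ++ [(u, g)]).length,
      (z i, ((ps ++ [(u, g)]).getD i 0).1) ∈ copyRel y (v ++ w) :=
    forall_getD_concat (P := fun i p => (z i, p.1) ∈ copyRel y (v ++ w))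
      (fun i hi => copyRel_le_append (hps i hi)) hzu
  have hG := ih ξ hξ hvw hps' hwin (by rwa [interleave_concat])
  exact ⟨F', hF', g, hg, hgF', by simpa using hG⟩

theorem not_iStratB_of_iiStratF (hK : 0 < K) (hy : ctx.IsBlockSeq y) (hyX : ∀ n, y n ∈ X)
    (h : ctx.IIStratF X (Ordinal.omega0 * β) {l | OutcomeEquiv K l y}) :
    ¬ctx.IStratB X β {l | PairOutcomeEquiv K l}ᶜ :=
  not_iStratBFrom_of_iiStratFFrom (ps := []) hK hy hyX (ctx.fspan_mono (Set.empty_subset _))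
    (by simp) (by simp) h

theorem iiStratG_of_iiStratF_of_iiStratA (hK : 0 < K) (hX'X : X' ⊆ X)
    (hz : ∀ n, z n ≠ 0) (hzy : ∀ n, z n ∈ ctx.fspan (Set.range y))
    (hF : ctx.IIStratF X (Ordinal.omega0 * β) {l | OutcomeEquiv K l y})
    (hA : ctx.IIStratA X β {l | PairOutcomeEquiv K l}) :
    ctx.IIStratG X' β {l | OutcomeEquiv (K * K) l z} :=
  iiStratGFrom_of_iiStratFFrom_of_iiStratAFrom (ps := []) hK hX'X hz hzy (by simp) (by simp) hF hA

end Simulation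

end Frame

section CoordBounded

variable {C : ℝ} {y y' : ℕ → 𝒲} {N : ℕ}

/-- Each term of a linear combination of `y` has norm at most `C` times that of the combination;
for a basic sequence such a `C` is controlled by the basis constant. -/
def CoordBounded (C : ℝ) (y : ℕ → 𝒲) : Prop :=
  ∀ (a : ℕ → ℝ) (k : ℕ), ∀ i < k, ‖a i • y i‖ ≤ C * ‖∑ j ∈ Finset.range k, a j • y j‖

theorem CoordBounded.norm_sum_le (h : CoordBounded C y) (hC : 0 ≤ C)
    (hlt : ∀ i < N, ‖y' i‖ = ‖y i‖) (hge : ∀ i, N ≤ i → y' i = y i) (a : ℕ → ℝ) (k : ℕ) :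
    ‖∑ j ∈ Finset.range k, a j • y' j‖ ≤
      (1 + 2 * C * N) * ‖∑ j ∈ Finset.range k, a j • y j‖ := by
  set v := ∑ j ∈ Finset.range k, a j • y j
  have hterm : ∀ j ∈ Finset.range k,
      ‖a j • y' j - a j • y j‖ ≤ if j < N then 2 * C * ‖v‖ else 0 := by
    intro j hj
    split_ifs with hjN
    · have hnorm : ‖a j • y' j‖ = ‖a j • y j‖ := by rw [norm_smul, norm_smul, hlt j hjN]
      have hbound := h a k j (Finset.mem_range.1 hj)
      linarith [norm_sub_le (a j • y' j) (a j • y j)]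
    · simp [hge j (not_lt.1 hjN)]
  have hfilter : {j ∈ Finset.range k | j < N} ⊆ Finset.range N := fun j hj =>
    Finset.mem_range.2 (Finset.mem_filter.1 hj).2
  calc ‖∑ j ∈ Finset.range k, a j • y' j‖
      = ‖v + ∑ j ∈ Finset.range k, (a j • y' j - a j • y j)‖ := by
        rw [Finset.sum_sub_distrib, add_sub_cancel]
    _ ≤ ‖v‖ + ∑ j ∈ Finset.range k, ‖a j • y' j - a j • y j‖ :=
        (norm_add_le _ _).trans (by gcongr; exact _root_.norm_sum_le _ _)
    _ ≤ ‖v‖ + ∑ j ∈ Finset.range k, if j < N then 2 * C * ‖v‖ else 0 := by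
        gcongr with j hj
        exact hterm j hj
    _ ≤ ‖v‖ + N * (2 * C * ‖v‖) := by
        rw [← Finset.sum_filter, Finset.sum_const, nsmul_eq_mul]
        gcongr
        simpa using Finset.card_le_card hfilter
    _ = (1 + 2 * C * N) * ‖v‖ := by ring

theorem CoordBounded.seqEquiv (h : CoordBounded C y) (h' : CoordBounded C y') (hC : 0 ≤ C)
    (hlt : ∀ i < N, ‖y' i‖ = ‖y i‖) (hge : ∀ i, N ≤ i → y' i = y i) (k : ℕ) :
    SeqEquiv (1 + 2 * C * N) k y' y :=
  (seqEquiv_iff (by positivity)).2 fun a => ⟨h.norm_sum_le hC hlt hge a k,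
    h'.norm_sum_le hC (fun i hi => (hlt i hi).symm) (fun i hi => (hge i hi).symm) a k⟩

end CoordBounded

namespace Frame

section Uniformization

variable {ctx : Frame 𝒲} {Y : Set 𝒲} {x : 𝒲} {y : ℕ → 𝒲} {γ : Ordinal}

variable (ctx) in
theorem exists_bounded_proj : ∃ (C : ℝ) (P : ℕ → 𝒲 →L[ℝ] 𝒲), ∀ N, ‖P N‖ ≤ C ∧
    (∀ x ∈ ctx.supported (Set.Iio N), P N x = x) ∧ ∀ x ∈ ctx.supported (Set.Ici N), P N x = 0 := by
  have := ctx.complete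
  obtain ⟨b, hb⟩ := ctx.basis.exists_schauderBasis
  obtain ⟨C, hC⟩ := b.exists_norm_proj_le
  have hP (N i : ℕ) : b.proj N (ctx.e i) = if i < N then ctx.e i else 0 := by
    rw [← hb, b.proj_apply_basis_mem]
  refine ⟨C, b.proj, fun N => ⟨hC N, fun x hx => ?_, fun x hx => ?_⟩⟩
  · refine LinearMap.eqOn_span (f := (b.proj N : 𝒲 →ₗ[ℝ] 𝒲)) (g := LinearMap.id) ?_ hx
    rintro _ ⟨i, hi : i < N, rfl⟩
    exact (hP N i).trans (if_pos hi)
  · refine LinearMap.eqOn_span (f := (b.proj N : 𝒲 →ₗ[ℝ] 𝒲)) (g := 0) ?_ hx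
    rintro _ ⟨i, hi : N ≤ i, rfl⟩
    exact (hP N i).trans (if_neg hi.not_gt)

variable (ctx) in
theorem exists_coordBounded : ∃ C : ℝ, 0 ≤ C ∧ ∀ y, ctx.IsBlockSeq y → CoordBounded C y := by
  obtain ⟨C, P, hP⟩ := ctx.exists_bounded_proj
  have hC : 0 ≤ C := (norm_nonneg _).trans (hP 0).1
  refine ⟨2 * C, by positivity, fun y hy a k i hik => ?_⟩
  obtain ⟨m, hmono, hm⟩ := hy.exists_mem_supported
  have hP_lt {j n : ℕ} (hjn : j < n) : P (m n) (y j) = y j :=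
    (hP _).2.1 _ (ctx.supported_mono (fun _ h => h.2.trans_le (hmono.monotone hjn)) (hm j))
  have hP_ge {j n : ℕ} (hnj : n ≤ j) : P (m n) (y j) = 0 :=
    (hP _).2.2 _ (ctx.supported_mono (fun _ h => (hmono.monotone hnj).trans h.1) (hm j))
  have hdiff (j : ℕ) : P (m (i + 1)) (y j) - P (m i) (y j) = if j = i then y i else 0 := by
    obtain hji | rfl | hij := lt_trichotomy j i
    · rw [hP_lt (hji.trans i.lt_succ_self), hP_lt hji, sub_self, if_neg hji.ne]
    · rw [hP_lt j.lt_succ_self, hP_ge le_rfl, sub_zero, if_pos rfl]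
    · rw [hP_ge (Nat.succ_le_of_lt hij), hP_ge hij.le, sub_zero, if_neg hij.ne']
  set v := ∑ j ∈ Finset.range k, a j • y j with hv
  calc ‖a i • y i‖ = ‖P (m (i + 1)) v - P (m i) v‖ := by
        simp only [hv, map_sum, map_smul, ← Finset.sum_sub_distrib, ← smul_sub, hdiff, smul_ite,
          smul_zero, Finset.sum_ite_eq', Finset.mem_range, hik, if_true]
    _ ≤ ‖P (m (i + 1)) v‖ + ‖P (m i) v‖ := norm_sub_le _ _
    _ ≤ C * ‖v‖ + C * ‖v‖ :=
        add_le_add ((P _).le_of_opNorm_le (hP _).1 v) ((P _).le_of_opNorm_le (hP _).1 v)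
    _ = 2 * C * ‖v‖ := by ring

theorem norm_mem_of_mem_W (hx : x ∈ ctx.W) : ‖x‖ ∈ ctx.𝔽 := by
  rw [W, fspan_eq_span, SetLike.mem_coe, Finsupp.mem_span_range_iff_exists_finsupp] at hx
  obtain ⟨c, rfl⟩ := hx
  exact ctx.norm_mem c.support (fun i => c i) fun i _ => (c i).2

theorem IsBlockSubspace.div_norm_smul_mem (hY : ctx.IsBlockSubspace Y) {b : 𝒲} (hb : b ∈ Y)
    (hx : x ∈ ctx.W) : (‖x‖ / ‖b‖) • b ∈ Y := by
  have hc : ‖x‖ / ‖b‖ ∈ ctx.𝔽 :=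
    div_mem (norm_mem_of_mem_W hx) (norm_mem_of_mem_W (hY.subset_W hb))
  rw [← hY.fspan_eq, fspan_eq_span]
  exact Submodule.smul_mem _ (⟨_, hc⟩ : ctx.𝔽) (Submodule.subset_span hb)

theorem IsBlockSubspace.exists_norm_eq (hY : ctx.IsBlockSubspace Y) :
    ∃ m : ℕ → ℕ, ∀ y : ℕ → 𝒲, (∀ i, y i ∈ ctx.W) → (∀ i, y i ≠ 0) →
      ∃ x, ctx.IsBlockSeq x ∧ ∀ i, x i ∈ Y ∧ ‖x i‖ = ‖y i‖ ∧
        x i ∈ ctx.supported (Set.Ico (m i) (m (i + 1))) := by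
  obtain ⟨b, hb, -, hbY⟩ := id hY
  obtain ⟨m, -, hm⟩ := hb.exists_mem_supported
  refine ⟨m, fun y hyW hy => ?_⟩
  let x (i : ℕ) : 𝒲 := (‖y i‖ / ‖b i‖) • b i
  have hxY (i : ℕ) : x i ∈ Y :=
    hY.div_norm_smul_mem (hbY ▸ ctx.subset_fspan _ ⟨i, rfl⟩) (hyW i)
  have hxm (i : ℕ) : x i ∈ ctx.supported (Set.Ico (m i) (m (i + 1))) :=
    Submodule.smul_mem _ _ (hm i)
  have hnorm (i : ℕ) : ‖x i‖ = ‖y i‖ := by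
    rw [norm_smul, norm_div, norm_norm, norm_norm,
      div_mul_cancel₀ _ (norm_ne_zero_iff.2 (hb.2.1 i))]
  have hne (i : ℕ) : x i ≠ 0 := norm_ne_zero_iff.1 (hnorm i ▸ norm_ne_zero_iff.2 (hy i))
  exact ⟨x, isBlockSeq_of_mem_supported (fun i => hY.subset_W (hxY i)) hne hxm,
    fun i => ⟨hxY i, hnorm i, hxm i⟩⟩

theorem IsBlockSeq.ite {x : ℕ → 𝒲} {m : ℕ → ℕ} {N : ℕ} (hx : ctx.IsBlockSeq x)
    (hxm : ∀ i, x i ∈ ctx.supported (Set.Ico (m i) (m (i + 1)))) (hy : ctx.IsBlockSeq y)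
    (hyN : ∀ i, N ≤ i → y i ∈ ctx.supported (Set.Ici (m N))) :
    ctx.IsBlockSeq fun i => if i < N then x i else y i := by
  obtain ⟨p, -, hp⟩ := hy.exists_mem_supported
  refine isBlockSeq_of_mem_supported (m := fun i => if i < N then m i else max (m N) (p i))
    (fun i => ?_) (fun i => ?_) fun i => ?_
  · split_ifs
    exacts [hx.1 i, hy.1 i]
  · split_ifs
    exacts [hx.2.1 i, hy.2.1 i]
  · obtain hi | hi := lt_or_ge i N
    · simp only [if_pos hi]
      refine ctx.supported_mono (Set.Ico_subset_Ico_right ?_) (hxm i)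
      obtain hi' | rfl := Nat.lt_or_eq_of_le (Nat.succ_le_of_lt hi)
      · rw [if_pos hi']
      · rw [if_neg (lt_irrefl _)]
        exact le_max_left _ _
    · simp only [if_neg hi.not_gt, if_neg (hi.trans i.le_succ).not_gt]
      have hmem := (ctx.supported_inter _ _).ge (Submodule.mem_inf.2 ⟨hyN i hi, hp i⟩)
      refine ctx.supported_mono ?_ hmem
      exact fun j hj => ⟨max_le hj.1 hj.2.1, hj.2.2.trans_le (le_max_right _ _)⟩

theorem IsBlockSubspace.exists_replace_initial (hY : ctx.IsBlockSubspace Y) (N : ℕ) :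
    ∃ Y', ctx.IsBlockSubspace Y' ∧ Y' ⊆ Y ∧
      ∀ y, ctx.IsBlockSeq y → (∀ i, N ≤ i → y i ∈ Y') →
        ∃ y', ctx.IsBlockSeq y' ∧ (∀ i, y' i ∈ Y) ∧ (∀ i < N, ‖y' i‖ = ‖y i‖) ∧
          ∀ i, N ≤ i → y' i = y i := by
  obtain ⟨m, hm⟩ := hY.exists_norm_eq
  obtain ⟨Y', hY', hY'Y, hY'N⟩ := hY.exists_subset_supported (m N)
  refine ⟨Y', hY', hY'Y, fun y hy hyY' => ?_⟩
  obtain ⟨x, hx, hxY⟩ := hm y hy.1 hy.2.1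
  refine ⟨fun i => if i < N then x i else y i,
    hx.ite (fun i => (hxY i).2.2) hy fun i hi => hY'N (hyY' i hi), fun i => ?_,
    fun i hi => by simpa only [if_pos hi] using (hxY i).2.1, fun i hi => if_neg hi.not_gt⟩
  dsimp only
  split_ifs with hi
  exacts [(hxY i).1, hY'Y (hyY' i (not_lt.1 hi))]

-- Suppose not. Then there are ever smaller subspaces in which I wins against every block sequence,
-- with ever worse constants; a diagonal subspace is almost contained in all of them. A block
-- sequence in it becomes one in the `n`th subspace when finitely many terms are replaced, and the
-- `n`th constant is chosen to absorb the cost of this, so no constant is left for `H`.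
theorem exists_uniform_constant
    (H : ∀ X, ctx.IsBlockSubspace X → ∃ y, ctx.IsBlockSeq y ∧ (∀ n, y n ∈ X) ∧
      ∃ K : ℝ, 1 ≤ K ∧ ¬ctx.IStratF X γ {l | ¬OutcomeEquiv K l y}) :
    ∃ X₀, ctx.IsBlockSubspace X₀ ∧ ∃ K : ℝ, 1 ≤ K ∧ ∀ X, ctx.IsBlockSubspace X → X ⊆ X₀ →
      ∃ y, ctx.IsBlockSeq y ∧ (∀ n, y n ∈ X) ∧
        ¬ctx.IStratF X γ {l | ¬OutcomeEquiv K l y} := by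
  by_contra! hcon
  obtain ⟨C, hC, hbound⟩ := ctx.exists_coordBounded
  have hdense (n N : ℕ) (X : Set 𝒲) (hX : ctx.IsBlockSubspace X) :
      ∃ Y, ctx.IsBlockSubspace Y ∧ Y ⊆ X ∧ ∀ y, ctx.IsBlockSeq y → (∀ i, N ≤ i → y i ∈ Y) →
        ctx.IStratF Y γ {l | ¬OutcomeEquiv (n + 1) l y} := by
    have hcost : (0 : ℝ) ≤ 2 * C * N := by positivity
    obtain ⟨Z, hZ, hZX, hwin⟩ := hcon X hX ((n + 1) * (1 + 2 * C * N))
      (one_le_mul_of_one_le_of_one_le (by simp) (by simpa using hcost))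
    obtain ⟨Y, hY, hYZ, hreplace⟩ := hZ.exists_replace_initial N
    refine ⟨Y, hY, hYZ.trans hZX, fun y hy hyY => ?_⟩
    obtain ⟨y', hy', hy'Z, hlt, hge⟩ := hreplace y hy hyY
    refine IStratFFrom.mono (hwin y' hy' hy'Z) hY (.of_subset hYZ) fun l hl hly => hl ?_
    exact SeqEquiv.trans (by positivity) (by positivity) hly
      (((hbound y hy).seqEquiv (hbound y' hy') hC hlt hge _).symm (by positivity))
  obtain ⟨X, hX, -, hdiag⟩ := exists_diagonal hdense ctx.isBlockSubspace_W
  obtain ⟨y, hy, hyX, K, hK, hlose⟩ := H X hX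
  obtain ⟨n, hn⟩ := exists_nat_ge K
  obtain ⟨N, Y, -, hwin, hXY⟩ := hdiag n
  obtain ⟨m, hmono, hm⟩ := hy.exists_mem_supported
  have hyN (i : ℕ) (hi : N ≤ i) : y i ∈ Y :=
    hXY ⟨hyX i, ctx.supported_mono (fun j hj => (hi.trans hmono.le_apply).trans hj.1) (hm i)⟩
  refine hlose (IStratFFrom.mono (hwin y hy hyN) hX ⟨N, hXY⟩ fun l hl hly => hl ?_)
  exact SeqEquiv.mono (by positivity) (by linarith) hly

end Uniformization

end Frame

end Rosendal

namespace Rosendal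

/-- game-theoretic dichotomy.  For every countable ordinal `α` there
is a block subspace `X ⊆ W` such that either (1) for every block sequence `(y n)` in `X`
and `K ≥ 1`, I has a strategy in `F^{ωα}_X` to play outcomes not `K`-equivalent to
`(y n)`, or (2) there is `K ≥ 1` such that for every block sequence `(z n)` in `X`, II
has a strategy in `G^α_X` to play outcomes `K`-equivalent to `(z n)`. -/
theorem game_dichotomy
    (𝒲 : Type) [NormedAddCommGroup 𝒲] [NormedSpace ℝ 𝒲] (ctx : Frame 𝒲)
    (α : Ordinal) (hα : α < (Cardinal.aleph 1).ord) :
    ∃ X : Set 𝒲, ctx.IsBlockSubspace X ∧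
      ((∀ y : ℕ → 𝒲, ctx.IsBlockSeq y → (∀ n, y n ∈ X) → ∀ K : ℝ, 1 ≤ K →
          ctx.IStratF X (Ordinal.omega0 * α) {l | ¬OutcomeEquiv K l y}) ∨
       (∃ K : ℝ, 1 ≤ K ∧ ∀ z : ℕ → 𝒲, ctx.IsBlockSeq z → (∀ n, z n ∈ X) →
          ctx.IIStratG X α {l | OutcomeEquiv K l z})) := by
  by_contra! hcon
  have hlose (X : Set 𝒲) (hX : ctx.IsBlockSubspace X) := (hcon X hX).1
  obtain ⟨X₀, hX₀, K, hK, hy⟩ := Frame.exists_uniform_constant hlose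
  have hK₀ : 0 < K := one_pos.trans_le hK
  obtain ⟨X, hX, hXX₀, hwin⟩ := Frame.exists_iiStratA_or_iStratB
    (countable_Iic_of_lt_aleph_one_ord hα) {l | PairOutcomeEquiv K l} hX₀
  obtain ⟨y, hy, hyX, hnotI⟩ := hy X hX hXX₀
  have hF : ctx.IIStratF X (Ordinal.omega0 * α) {l | OutcomeEquiv K l y} :=
    Frame.iiStratF_of_not_iStratF hnotI
  have hA := hwin.resolve_right (Frame.not_iStratB_of_iiStratF hK₀ hy hyX hF)
  obtain ⟨z, hz, hzy, hnotG⟩ :=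
    (hcon _ hy.isBlockSubspace).2 (K * K) (one_le_mul_of_one_le_of_one_le hK hK)
  have hyX' := hX.fspan_subset (Set.range_subset_iff.2 hyX)
  exact hnotG (Frame.iiStratG_of_iiStratF_of_iiStratA hK₀ hyX' hz.2.1 hzy hF hA)

end Rosendal
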